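/- Let n ≥ 2, p ≥ 1, and let K, L ⊆ ℝⁿ be measurable sets star-shaped about the origin whose radial functions satisfy ∫_{S^{n-1}} ρ_K(u)^{n+p} du < ∞ and ∫_{S^{n-1}} ρ_L(u)^{n+p} du < ∞. Then ∫_K ∫_L [x,y]^p dx dy ≥ (n(n−1)ω_{n−1}ω_{n+p−2} / ((n+p)² ω_{n+p−3} ω_n^{1+2p/n})) · (V(K)V(L))^{(n+p)/n}. -/

import Mathlib

/-!
The proof is a symmetrization argument that shows the centred ball to be extremal, followed by an
explicit computation for the ball.

**Steiner symmetrization decreases the energy.** For a unit vector `e` and `w, v ⊥ e` one has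
`[w + s e, v + t e]² = [w, v]² + ‖s v - t w‖²`, so for `p ≥ 1` the kernel `[·, ·]^p` restricted to a pair
of lines parallel to `e` is an even convex function of `(s, t)`. For such kernels, replacing two
densities bounded by `1` on the line by centred intervals of the same masses does not increase the
double integral (`line_ineq`). Integrating over all pairs of lines gives `dblInt_steiner_le`.

**The ball is a minimizer.** Fix densities with values in `[0, 1]`, mass `1` and support in a fixed
ball. By weak compactness there is, among the pairs with energy not exceeding that of the given pair,
one with the least sum of second moments (`exists_minimizer`). Symmetrization keeps the energy bound
and strictly lowers the second moment unless it fixes the density (`steiner_secondMoment`), so the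
minimizing pair is fixed by the symmetrizations in all directions, and is therefore a pair of centred
balls (`eq_ball_of_steiner`). This yields `dblInt_ball_le`; scaling and exhaustion extend it to all
sets of finite positive volume (`dblInt_ge`).

**The constant.** The energy of the unit ball reduces to `∫ [e, u]^p du` over the sphere, which is
obtained from the Gaussian integral of `[e, y]^p` (`lintegral_sphere_sinePair`, `dblInt_ball`).

**From `[0, ∞]`-valued to real integrals.** The hypotheses on the radial functions make the `p`-th
moments of `K` and `L` finite (`lintegral_norm_rpow_lt_top`), and `[x, y] ≤ ‖x‖ ‖y‖` then makes the
iterated Bochner integral agree with the energy. If a volume is `0` or infinite, its `toReal` is `0`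
and the inequality is trivial.
-/

open MeasureTheory Metric Set
open scoped RealInnerProductSpace ENNReal

noncomputable section

/-- `[x,y]`: the area of the parallelogram spanned by `x` and `y`. -/
def sinePair {n : ℕ} (x y : EuclideanSpace ℝ (Fin n)) : ℝ :=
  Real.sqrt (‖x‖ ^ 2 * ‖y‖ ^ 2 - ⟪x, y⟫ ^ 2)

/-- `ω_q = π^{q/2}/Γ(1+q/2)`. -/
def omegaVol (q : ℝ) : ℝ := Real.pi ^ (q / 2) / Real.Gamma (1 + q / 2)

/-- The rotation invariant probability measure on the unit sphere `S^{n-1}`. -/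
def sphereProb (n : ℕ) : Measure (sphere (0 : EuclideanSpace ℝ (Fin n)) 1) :=
  ((volume : Measure (EuclideanSpace ℝ (Fin n))).toSphere univ)⁻¹ •
    (volume : Measure (EuclideanSpace ℝ (Fin n))).toSphere

/-- The radial function of a set star-shaped about the origin. -/
def radialFn {n : ℕ} (K : Set (EuclideanSpace ℝ (Fin n))) (u : EuclideanSpace ℝ (Fin n)) : ℝ :=
  sSup {r : ℝ | 0 ≤ r ∧ r • u ∈ K}

/-- `K` is star-shaped about the origin. -/
def IsStarShaped {n : ℕ} (K : Set (EuclideanSpace ℝ (Fin n))) : Prop :=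
  0 ∈ K ∧ ∀ x ∈ K, ∀ t : ℝ, 0 ≤ t → t ≤ 1 → t • x ∈ K

/-- `K` is a star body: star-shaped about the origin, with radial function positive and
continuous on the unit sphere, and `K = {r • u : u ∈ S^{n-1}, 0 ≤ r ≤ ρ_K(u)}`. -/
def IsStarBody {n : ℕ} (K : Set (EuclideanSpace ℝ (Fin n))) : Prop :=
  IsStarShaped K ∧
  (∀ u ∈ sphere (0 : EuclideanSpace ℝ (Fin n)) 1, 0 < radialFn K u) ∧
  ContinuousOn (radialFn K) (sphere (0 : EuclideanSpace ℝ (Fin n)) 1) ∧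
  ∀ u ∈ sphere (0 : EuclideanSpace ℝ (Fin n)) 1, ∀ r : ℝ, 0 ≤ r →
    (r • u ∈ K ↔ r ≤ radialFn K u)

/-- The constant `c̃_{n,p}`. -/
def tildeC (n : ℕ) (p : ℝ) : ℝ :=
  ((n : ℝ) - 1) * omegaVol ((n : ℝ) - 1) * omegaVol ((n : ℝ) + p - 2) /
    (((n : ℝ) + p) * omegaVol (n : ℝ) * omegaVol ((n : ℝ) + p - 3))

/-- The polar body `Λ_p°K` of the `L_p`-sine centroid body of `K`. -/
def sineCentroidPolar (n : ℕ) (p : ℝ) (K : Set (EuclideanSpace ℝ (Fin n))) :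
    Set (EuclideanSpace ℝ (Fin n)) :=
  {x | ∫ y in K, sinePair x y ^ p ≤ tildeC n p * (volume K).toReal}

/-- The sine polar body `K^◇`. -/
def sinePolar {n : ℕ} (K : Set (EuclideanSpace ℝ (Fin n))) : Set (EuclideanSpace ℝ (Fin n)) :=
  {x | ∀ y ∈ K, sinePair x y ≤ 1}

/-- The closed solid cylinder `C⁻(u,r)`. -/
def solidCylinder {n : ℕ} (u : EuclideanSpace ℝ (Fin n)) (r : ℝ) :
    Set (EuclideanSpace ℝ (Fin n)) := {x | sinePair x u ≤ r}

/-- `K ∈ C_e^n`: an origin-symmetric convex body that is an intersection of closed solid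
cylinders. -/
def IsCylBody {n : ℕ} (K : Set (EuclideanSpace ℝ (Fin n))) : Prop :=
  IsCompact K ∧ Convex ℝ K ∧ (interior K).Nonempty ∧ (∀ x ∈ K, -x ∈ K) ∧
  ∃ I : Set (EuclideanSpace ℝ (Fin n) × ℝ),
    (∀ c ∈ I, c.1 ∈ sphere (0 : EuclideanSpace ℝ (Fin n)) 1 ∧ 0 < c.2) ∧
    K = ⋂ c ∈ I, solidCylinder c.1 c.2

/-- The cylindrical hull of a set. -/
def cylHull {n : ℕ} (E : Set (EuclideanSpace ℝ (Fin n))) : Set (EuclideanSpace ℝ (Fin n)) :=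
  ⋂ c ∈ {c : EuclideanSpace ℝ (Fin n) × ℝ |
      c.1 ∈ sphere (0 : EuclideanSpace ℝ (Fin n)) 1 ∧ 0 < c.2 ∧ E ⊆ solidCylinder c.1 c.2},
    solidCylinder c.1 c.2

/-- The cylindrical support function `c_K`. -/
def cylSupport {n : ℕ} (K : Set (EuclideanSpace ℝ (Fin n))) (x : EuclideanSpace ℝ (Fin n)) : ℝ :=
  sSup ((fun y => sinePair x y) '' K)

/-- The support function `h_K`. -/
def suppFn {n : ℕ} (K : Set (EuclideanSpace ℝ (Fin n))) (x : EuclideanSpace ℝ (Fin n)) : ℝ :=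
  sSup ((fun y => ⟪x, y⟫) '' K)


/-! ### Pairs of densities on the line -/

/-- An even convex function on the line is nondecreasing in the absolute value. -/
lemma even_convex_mono {h : ℝ → ℝ} (hc : ConvexOn ℝ univ h) (he : ∀ x, h (-x) = h x)
    {c α : ℝ} (hcα : |c| ≤ |α|) : h c ≤ h α := by
  have hmem : c ∈ segment ℝ (-|α|) |α| := by
    rw [segment_eq_Icc (by linarith [abs_nonneg α])]
    exact abs_le.mp hcα
  have h1 := hc.le_on_segment (mem_univ _) (mem_univ _) hmem
  rcases abs_choice α with h2 | h2 <;> rw [h2] at h1 <;> simpa [he] using h1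

/-- Symmetrized form of the comparison on the line: `Φ` is convex and even on `ℝ²`, so averaging
`(t₁, s₁)` with `-(t₂, s₂)`, and `(t₁, s₂)` with `-(t₂, s₁)`, gives the points `(α, β)`, `(α, -β)` with
`α = (t₁ - t₂)/2`, `β = (s₁ - s₂)/2`; evenness and convexity in each variable then allow `α` and `β`
to be shrunk to `c` and `d`. -/
lemma four_point {Φ : ℝ × ℝ → ℝ} (hc : ConvexOn ℝ univ Φ) (he : ∀ z, Φ (-z) = Φ z)
    {c d t₁ t₂ s₁ s₂ : ℝ} (hT : |c| ≤ |(t₁ - t₂) / 2|) (hS : |d| ≤ |(s₁ - s₂) / 2|) :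
    (Φ (c, d) + Φ (-c, -d)) + (Φ (c, -d) + Φ (-c, d)) ≤
      (Φ (t₁, s₁) + Φ (t₂, s₂)) + (Φ (t₁, s₂) + Φ (t₂, s₁)) := by
  set α := (t₁ - t₂) / 2
  set β := (s₁ - s₂) / 2
  have mid : ∀ z w : ℝ × ℝ, 2 * Φ ((1/2 : ℝ) • z + (1/2 : ℝ) • w) ≤ Φ z + Φ w := by
    intro z w
    have := hc.2 (mem_univ z) (mem_univ w) (by norm_num : (0:ℝ) ≤ 1/2)
      (by norm_num : (0:ℝ) ≤ 1/2) (by norm_num)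
    simp only [smul_eq_mul] at this
    linarith
  have e : ∀ a b, Φ (-a, -b) = Φ (a, b) := fun a b => he (a, b)
  have h1 := mid (t₁, s₁) (-t₂, -s₂)
  have h2 := mid (t₁, s₂) (-t₂, -s₁)
  have k1 : (1/2 : ℝ) • (t₁, s₁) + (1/2 : ℝ) • (-t₂, -s₂) = (α, β) := by
    ext <;> simp [α, β] <;> ring
  have k2 : (1/2 : ℝ) • (t₁, s₂) + (1/2 : ℝ) • (-t₂, -s₁) = (α, -β) := by
    ext <;> simp [α, β] <;> ring
  rw [k1, e] at h1
  rw [k2, e] at h2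
  have cv1 : ∀ b, ConvexOn ℝ univ (fun a => Φ (a, b) + Φ (a, -b)) := by
    intro b
    have q : ∀ b, ConvexOn ℝ univ (fun a => Φ (a, b)) := by
      intro b
      refine ⟨convex_univ, fun x _ y _ r s hr hs hrs => ?_⟩
      have := hc.2 (mem_univ (x, b)) (mem_univ (y, b)) hr hs hrs
      simpa [← add_mul, hrs] using this
    exact (q b).add (q (-b))
  have cv2 : ∀ a, ConvexOn ℝ univ (fun b => Φ (a, b) + Φ (a, -b)) := by
    intro a
    refine ⟨convex_univ, fun x _ y _ r s hr hs hrs => ?_⟩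
    have := hc.2 (mem_univ (a, x)) (mem_univ (a, y)) hr hs hrs
    have h' := hc.2 (mem_univ (a, -x)) (mem_univ (a, -y)) hr hs hrs
    simp only [Prod.smul_mk, Prod.mk_add_mk, smul_eq_mul, ← add_mul, hrs, one_mul] at this h' ⊢
    have : -(r * x + s * y) = r * (-x) + s * (-y) := by ring
    rw [this]; linarith
  have m1 := even_convex_mono (cv1 d) (c := c) (α := α) (fun x => by
    have := e x d; have h' := e x (-d); simp only [neg_neg] at h'; simp only [h']; linarith) hT
  have m2 := even_convex_mono (cv2 α) (c := d) (α := β) (fun x => by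
    simp only [neg_neg]; ring) hS
  have e1 := e c d
  have e2 := e c (-d)
  simp only [neg_neg] at e2
  linarith

/-- Quantile transport: a density `f ≤ 1` on the line of mass `2 * a` is the image of Lebesgue measure
on `(-a, a)` under a map that does not decrease distances. -/
lemma exists_transport {f : ℝ → ℝ≥0∞} (hf1 : ∀ x, f x ≤ 1) {a : ℝ}
    (ha : 0 ≤ a) (hfa : ∫⁻ x, f x = ENNReal.ofReal (2 * a)) :
    ∃ T : ℝ → ℝ, Measurable T ∧
      Measure.map T (volume.restrict (Ioo (-a) a)) = volume.withDensity f ∧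
      ∀ c ∈ Ioo (-a) a, ∀ d ∈ Ioo (-a) a, c ≤ d → d - c ≤ T d - T c := by
  set μ := volume.withDensity f with hμ
  have hμu : μ univ = ENNReal.ofReal (2 * a) := by simp [hμ, hfa]
  have : IsFiniteMeasure μ := ⟨by rw [hμu]; exact ENNReal.ofReal_lt_top⟩
  have hμle : ∀ s, μ s ≤ volume s := by
    intro s
    have : μ ≤ volume.withDensity 1 := withDensity_mono (ae_of_all _ hf1)
    simpa using this s
  set G : ℝ → ℝ := fun s => μ.real (Iic s) - a with hG
  have Gmono : Monotone G := fun s t h => by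
    refine sub_le_sub_right ?_ a; exact measureReal_mono (μ := μ) (Iic_subset_Iic.mpr h) (measure_ne_top μ _)
  have Glip : ∀ s t, s ≤ t → G t - G s ≤ t - s := by
    intro s t h
    have h1 : μ.real (Iic t) = μ.real (Iic s) + μ.real (Ioc s t) := by
      rw [← Iic_union_Ioc_eq_Iic h, measureReal_union (Iic_disjoint_Ioc le_rfl) measurableSet_Ioc]
    have h2 : μ.real (Ioc s t) ≤ t - s := by
      have := ENNReal.toReal_mono (by simp) (hμle (Ioc s t))
      simpa [Measure.real, h] using this
    simp only [hG]; linarith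
  have Gcont : Continuous G := by
    refine (LipschitzWith.of_le_add_mul 1 (f := G) fun s t => ?_).continuous
    rcases le_total s t with h | h
    · have := Gmono h; have := dist_nonneg (x := s) (y := t); simp; linarith
    · have := Glip _ _ h; rw [Real.dist_eq, abs_of_nonneg (by linarith)]; simp; linarith
  have Gbot : Filter.Tendsto G Filter.atBot (nhds (-a)) := by
    have := tendsto_measure_iInter_atBot (μ := μ) (s := fun x : ℝ => Iic x)
      (fun _ => measurableSet_Iic.nullMeasurableSet) (fun _ _ h => Iic_subset_Iic.mpr h)
      ⟨0, measure_ne_top μ _⟩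
    rw [show (⋂ x : ℝ, Iic x) = ∅ by ext x; simpa using exists_lt x, measure_empty] at this
    have := (ENNReal.tendsto_toReal (by simp)).comp this
    simpa [hG, Measure.real, Function.comp_def] using this.sub_const a
  have Gtop : Filter.Tendsto G Filter.atTop (nhds a) := by
    have := (tendsto_measure_Iic_atTop μ)
    have := (ENNReal.tendsto_toReal (by simp)).comp this
    rw [hμu, ENNReal.toReal_ofReal (by linarith)] at this
    have := this.sub_const a
    rw [show 2 * a - a = a by ring] at this
    simpa [hG, Measure.real, Function.comp_def] using this
  set T₀ : ℝ → ℝ := fun c => sInf {s | c ≤ G s} with hT₀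
  have key : ∀ c ∈ Ioo (-a) a, ∀ s, T₀ c ≤ s ↔ c ≤ G s := by
    intro c hc s
    have ne : {s | c ≤ G s}.Nonempty := (Gtop.eventually (Ici_mem_nhds hc.2)).exists
    have bd : BddBelow {s | c ≤ G s} := by
      obtain ⟨b, hb⟩ := (Gbot.eventually (Iio_mem_nhds hc.1)).exists
      refine ⟨b, fun s hs => ?_⟩
      by_contra hlt
      push Not at hlt
      have := Gmono hlt.le
      change c ≤ G s at hs
      linarith
    have cl : IsClosed {s | c ≤ G s} := isClosed_le continuous_const Gcont
    have hmem := cl.csInf_mem ne bd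
    exact ⟨fun h => le_trans hmem (Gmono h), fun h => csInf_le bd h⟩
  have GT : ∀ c ∈ Ioo (-a) a, G (T₀ c) = c := by
    intro c hc
    refine le_antisymm ?_ ((key c hc _).1 le_rfl)
    have : ∀ s, s < T₀ c → G s ≤ c := fun s hs => by
      by_contra h; push Not at h
      exact absurd ((key c hc s).2 h.le) (not_le.mpr hs)
    have : ∀ᶠ s in nhdsWithin (T₀ c) (Iio (T₀ c)), G s ≤ c :=
      Filter.eventually_of_mem self_mem_nhdsWithin this
    exact le_of_tendsto (Gcont.continuousAt.mono_left nhdsWithin_le_nhds) this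
  have Tmeas : Measurable ((Ioo (-a) a).indicator T₀) := by
    refine measurable_of_Iic fun s => ?_
    have hm : MeasurableSet (Ioo (-a) a ∩ Iic (G s)) := measurableSet_Ioo.inter measurableSet_Iic
    by_cases hs : 0 ≤ s
    · convert hm.union (measurableSet_Ioo (a := -a) (b := a)).compl using 1
      ext c
      by_cases hc : c ∈ Ioo (-a) a
      · simp only [mem_preimage, indicator_of_mem hc, mem_Iic, key c hc, mem_union, mem_inter_iff,
          mem_compl_iff, hc, true_and, not_true, or_false]
      · simp only [mem_preimage, indicator_of_notMem hc, mem_Iic, hs, mem_union, mem_inter_iff,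
          mem_compl_iff, hc, false_and, not_false_eq_true, or_true]
    · convert hm using 1
      ext c
      by_cases hc : c ∈ Ioo (-a) a
      · simp only [mem_preimage, indicator_of_mem hc, mem_Iic, key c hc, mem_inter_iff, hc,
          true_and]
      · simp only [mem_preimage, indicator_of_notMem hc, mem_Iic, hs, mem_inter_iff, hc, false_and]
  refine ⟨(Ioo (-a) a).indicator T₀, Tmeas, ?_, ?_⟩
  · have : IsFiniteMeasure (Measure.map ((Ioo (-a) a).indicator T₀)
        (volume.restrict (Ioo (-a) a))) := by infer_instance
    refine Measure.ext_of_Iic _ _ fun s => ?_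
    rw [Measure.map_apply Tmeas measurableSet_Iic, Measure.restrict_apply (Tmeas measurableSet_Iic)]
    have hle : G s ≤ a := Gmono.ge_of_tendsto Gtop s
    have hge : -a ≤ G s := Gmono.le_of_tendsto Gbot s
    have e1 : (Ioo (-a) a).indicator T₀ ⁻¹' Iic s ∩ Ioo (-a) a = Ioo (-a) a ∩ Iic (G s) := by
      ext c
      by_cases hc : c ∈ Ioo (-a) a
      · simp only [mem_preimage, indicator_of_mem hc, mem_Iic, key c hc, mem_inter_iff, hc,
          true_and, and_true]
      · simp only [mem_inter_iff, hc, false_and, and_false]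
    rw [e1]
    have e2 : volume (Ioo (-a) a ∩ Iic (G s)) = volume (Ioc (-a) (G s)) := by
      refine measure_congr ?_
      have : ∀ᵐ x : ℝ, x ≠ a := by simp [ae_iff]
      filter_upwards [this] with x hx
      refine propext ⟨fun h => ⟨h.1.1, h.2⟩, fun h => ⟨⟨h.1, ?_⟩, h.2⟩⟩
      exact lt_of_le_of_ne (h.2.trans hle) hx
    rw [e2, Real.volume_Ioc]
    have : G s - -a = μ.real (Iic s) := by simp [hG]
    rw [this, ofReal_measureReal]
  · intro c hc d hd hcd
    rw [indicator_of_mem hc, indicator_of_mem hd]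
    have hle : T₀ c ≤ T₀ d := (key c hc _).2 (by rw [GT d hd]; exact hcd)
    have := Glip _ _ hle
    rwa [GT c hc, GT d hd] at this

lemma lintegral_Ioo_neg (a : ℝ) (h : ℝ → ℝ≥0∞) :
    ∫⁻ c in Ioo (-a) a, h (-c) = ∫⁻ c in Ioo (-a) a, h c := by
  have := (Measure.measurePreserving_neg (volume : Measure ℝ)).setLIntegral_comp_preimage_emb
    (MeasurableEquiv.neg ℝ).measurableEmbedding h (Ioo (-a) a)
  rw [← this]; simp

/-- Among pairs of densities bounded by `1` with prescribed masses `2 * a`, `2 * b`, the double integral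
of an even convex kernel is smallest for the centred intervals. With transports `T`, `S` from
`exists_transport`, average over the four sign choices `(±c, ±d)` and apply `four_point` to
`T (±c)`, `S (±d)`. -/
lemma line_ineq {Φ : ℝ × ℝ → ℝ} (hcont : Continuous Φ) (hΦ0 : ∀ z, 0 ≤ Φ z)
    (hc : ConvexOn ℝ univ Φ) (he : ∀ z, Φ (-z) = Φ z)
    {f g : ℝ → ℝ≥0∞} (hf : Measurable f) (hg : Measurable g) (hf1 : ∀ x, f x ≤ 1)
    (hg1 : ∀ x, g x ≤ 1) {a b : ℝ} (ha : 0 ≤ a) (hb : 0 ≤ b)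
    (hfa : ∫⁻ x, f x = ENNReal.ofReal (2 * a)) (hgb : ∫⁻ x, g x = ENNReal.ofReal (2 * b)) :
    ∫⁻ c in Ioo (-a) a, ∫⁻ d in Ioo (-b) b, ENNReal.ofReal (Φ (c, d)) ≤
      ∫⁻ s, f s * ∫⁻ t, g t * ENNReal.ofReal (Φ (s, t)) := by
  obtain ⟨T, Tm, Tmap, Texp⟩ := exists_transport hf1 ha hfa
  obtain ⟨S, Sm, Smap, Sexp⟩ := exists_transport hg1 hb hgb
  have four : ∀ H : ℝ → ℝ → ℝ≥0∞, Measurable (Function.uncurry H) →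
      4 * ∫⁻ c in Ioo (-a) a, ∫⁻ d in Ioo (-b) b, H c d =
      ∫⁻ c in Ioo (-a) a, ∫⁻ d in Ioo (-b) b,
        ((H c d + H (-c) (-d)) + (H c (-d) + H (-c) d)) := by
    intro H hH
    have hm : ∀ (σ τ : ℝ → ℝ), Measurable σ → Measurable τ →
        Measurable (Function.uncurry fun c d => H (σ c) (τ d)) := fun σ τ hσ hτ =>
      hH.comp ((hσ.comp measurable_fst).prodMk (hτ.comp measurable_snd))
    have m0 := hm id id measurable_id measurable_id
    have m1 := hm _ _ measurable_neg measurable_neg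
    have m2 := hm id _ measurable_id measurable_neg
    have m3 := hm _ id measurable_neg measurable_id
    simp only [id] at m0 m1 m2 m3
    have i1 : ∫⁻ c in Ioo (-a) a, ∫⁻ d in Ioo (-b) b, H (-c) (-d) =
        ∫⁻ c in Ioo (-a) a, ∫⁻ d in Ioo (-b) b, H c d := by
      rw [lintegral_Ioo_neg a (fun c => ∫⁻ d in Ioo (-b) b, H c (-d))]
      exact lintegral_congr fun c => lintegral_Ioo_neg b (fun d => H c d)
    have i2 : ∫⁻ c in Ioo (-a) a, ∫⁻ d in Ioo (-b) b, H c (-d) =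
        ∫⁻ c in Ioo (-a) a, ∫⁻ d in Ioo (-b) b, H c d :=
      lintegral_congr fun c => lintegral_Ioo_neg b (fun d => H c d)
    have i3 : ∫⁻ c in Ioo (-a) a, ∫⁻ d in Ioo (-b) b, H (-c) d =
        ∫⁻ c in Ioo (-a) a, ∫⁻ d in Ioo (-b) b, H c d :=
      lintegral_Ioo_neg a (fun c => ∫⁻ d in Ioo (-b) b, H c d)
    have inner : ∀ c, ∫⁻ d in Ioo (-b) b, ((H c d + H (-c) (-d)) + (H c (-d) + H (-c) d)) =
        ((∫⁻ d in Ioo (-b) b, H c d) + ∫⁻ d in Ioo (-b) b, H (-c) (-d)) +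
        ((∫⁻ d in Ioo (-b) b, H c (-d)) + ∫⁻ d in Ioo (-b) b, H (-c) d) := by
      intro c
      rw [lintegral_add_left, lintegral_add_left, lintegral_add_left]
      · exact m2.comp measurable_prodMk_left
      · exact m0.comp measurable_prodMk_left
      · exact (m0.comp measurable_prodMk_left).add (m1.comp measurable_prodMk_left)
    simp_rw [inner]
    rw [lintegral_add_left, lintegral_add_left, lintegral_add_left, i1, i2, i3]
    · ring
    · exact m2.lintegral_prod_right'
    · exact m0.lintegral_prod_right'
    · exact m0.lintegral_prod_right'.add m1.lintegral_prod_right'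
  have hmΦ : Measurable fun z : ℝ × ℝ => ENNReal.ofReal (Φ z) := hcont.measurable.ennreal_ofReal
  have inn : ∀ s, ∫⁻ t, g t * ENNReal.ofReal (Φ (s, t)) =
      ∫⁻ d in Ioo (-b) b, ENNReal.ofReal (Φ (s, S d)) := by
    intro s
    have hm : Measurable fun t => ENNReal.ofReal (Φ (s, t)) := hmΦ.comp measurable_prodMk_left
    rw [← lintegral_map hm Sm, Smap, lintegral_withDensity_eq_lintegral_mul _ hg hm]
    rfl
  have hmS : Measurable fun z : ℝ × ℝ => ENNReal.ofReal (Φ (z.1, S z.2)) :=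
    hmΦ.comp (measurable_fst.prodMk (Sm.comp measurable_snd))
  have out : ∫⁻ s, f s * ∫⁻ t, g t * ENNReal.ofReal (Φ (s, t)) =
      ∫⁻ c in Ioo (-a) a, ∫⁻ d in Ioo (-b) b, ENNReal.ofReal (Φ (T c, S d)) := by
    simp_rw [inn]
    have hm : Measurable fun s => ∫⁻ d in Ioo (-b) b, ENNReal.ofReal (Φ (s, S d)) :=
      hmS.lintegral_prod_right'
    rw [← lintegral_map hm Tm, Tmap, lintegral_withDensity_eq_lintegral_mul _ hf hm]
    rfl
  rw [out]
  refine (ENNReal.mul_le_mul_iff_right (a := 4) (by norm_num) (by norm_num)).1 ?_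
  rw [four (fun c d => ENNReal.ofReal (Φ (c, d))) hmΦ,
    four (fun c d => ENNReal.ofReal (Φ (T c, S d)))
      (hmΦ.comp ((Tm.comp measurable_fst).prodMk (Sm.comp measurable_snd)))]
  refine setLIntegral_mono' measurableSet_Ioo fun c hc' => ?_
  refine setLIntegral_mono' measurableSet_Ioo fun d hd' => ?_
  have exp : ∀ (r : ℝ) (R : ℝ → ℝ), (∀ c ∈ Ioo (-r) r, ∀ d ∈ Ioo (-r) r, c ≤ d →
      d - c ≤ R d - R c) → ∀ x ∈ Ioo (-r) r, |x| ≤ |(R x - R (-x)) / 2| := by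
    intro r R hR x hx
    have hx' : -x ∈ Ioo (-r) r := ⟨by linarith [hx.2], by linarith [hx.1]⟩
    rcases le_total 0 x with h | h
    · have := hR _ hx' _ hx (by linarith)
      rw [abs_of_nonneg h, abs_of_nonneg (by linarith)]; linarith
    · have := hR _ hx _ hx' (by linarith)
      rw [abs_of_nonpos h, abs_of_nonpos (by linarith)]; linarith
  have := four_point hc he (exp a T Texp c hc') (exp b S Sexp d hd')
  simp only [← ENNReal.ofReal_add, hΦ0, add_nonneg]
  exact ENNReal.ofReal_le_ofReal this

/-! ### Slices and Steiner symmetrization -/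

section steiner
variable {n : ℕ}


/-- The decomposition `ℝⁿ = e^⊥ × ℝ e` preserves Lebesgue measure. -/
lemma measurePreserving_slice {e : EuclideanSpace ℝ (Fin n)} (he : ‖e‖ = 1) :
    MeasurePreserving (fun z : (ℝ ∙ e)ᗮ × ℝ => (z.1 : EuclideanSpace ℝ (Fin n)) + z.2 • e) := by
  have h1 := ((ℝ ∙ e).orthogonalDecomposition.symm).measurePreserving
  have h2 := (WithLp.volume_preserving_symm_measurableEquiv_toLp_prod (ℝ ∙ e) (ℝ ∙ e)ᗮ).symm
  have h3 := (LinearIsometryEquiv.toSpanUnitSingleton (𝕜 := ℝ) e he).measurePreserving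
  have h4 : MeasurePreserving (Prod.swap : (ℝ ∙ e)ᗮ × ℝ → ℝ × (ℝ ∙ e)ᗮ) :=
    Measure.measurePreserving_swap
  have h5 := h3.prod (MeasurePreserving.id (volume : Measure (ℝ ∙ e)ᗮ))
  have := h1.comp (h2.comp (h5.comp h4))
  convert this using 1
  ext z : 1
  change _ = (ℝ ∙ e).prodEquivOfIsCompl (ℝ ∙ e)ᗮ (Submodule.isCompl_orthogonal _)
    (LinearIsometryEquiv.toSpanUnitSingleton (𝕜 := ℝ) e he z.2, z.1)
  rw [Submodule.coe_prodEquivOfIsCompl']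
  simp [add_comm]

lemma lintegral_slice {e : EuclideanSpace ℝ (Fin n)} (he : ‖e‖ = 1)
    {h : EuclideanSpace ℝ (Fin n) → ℝ≥0∞} (hh : Measurable h) :
    ∫⁻ x, h x = ∫⁻ w : (ℝ ∙ e)ᗮ, ∫⁻ s : ℝ, h ((w : EuclideanSpace ℝ (Fin n)) + s • e) := by
  have hm := (measurePreserving_slice he).measurable
  rw [← (measurePreserving_slice he).lintegral_comp hh, Measure.volume_eq_prod,
    lintegral_prod (fun z : (ℝ ∙ e)ᗮ × ℝ => h ((z.1 : EuclideanSpace ℝ (Fin n)) + z.2 • e))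
      (hh.comp hm).aemeasurable]

/-- The integral of `f` over the line through `x` in direction `e`. -/
def lineMass (e : EuclideanSpace ℝ (Fin n)) (f : EuclideanSpace ℝ (Fin n) → ℝ≥0∞)
    (x : EuclideanSpace ℝ (Fin n)) : ℝ≥0∞ := ∫⁻ s : ℝ, f (x + s • e)

open Classical in
/-- The Steiner symmetrization of a density `f ≤ 1` in the unit direction `e`: on each line parallel
to `e` it is the indicator of the open interval centred on `e^⊥` whose length is the mass of `f` on
that line. In particular a `[0, 1]`-valued density is turned into an indicator function. -/
def steiner (e : EuclideanSpace ℝ (Fin n)) (f : EuclideanSpace ℝ (Fin n) → ℝ≥0∞)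
    (x : EuclideanSpace ℝ (Fin n)) : ℝ≥0∞ :=
  if ENNReal.ofReal (2 * |⟪e, x⟫|) < lineMass e f x then 1 else 0

lemma lineMass_add (e : EuclideanSpace ℝ (Fin n)) (f : EuclideanSpace ℝ (Fin n) → ℝ≥0∞)
    (x : EuclideanSpace ℝ (Fin n)) (t : ℝ) : lineMass e f (x + t • e) = lineMass e f x := by
  unfold lineMass
  rw [← lintegral_add_left_eq_self (fun s : ℝ => f (x + s • e)) t]
  simp only [add_assoc, add_smul]

lemma measurable_lineMass (e : EuclideanSpace ℝ (Fin n)) {f : EuclideanSpace ℝ (Fin n) → ℝ≥0∞}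
    (hf : Measurable f) : Measurable (lineMass e f) := by
  have : Measurable fun z : EuclideanSpace ℝ (Fin n) × ℝ => f (z.1 + z.2 • e) :=
    hf.comp (by fun_prop)
  exact this.lintegral_prod_right'

lemma measurable_steiner (e : EuclideanSpace ℝ (Fin n)) {f : EuclideanSpace ℝ (Fin n) → ℝ≥0∞}
    (hf : Measurable f) : Measurable (steiner e f) := by
  refine Measurable.ite (measurableSet_lt ?_ (measurable_lineMass e hf)) measurable_const
    measurable_const
  exact Measurable.ennreal_ofReal (by fun_prop)

/-- Admissible densities: measurable, with values in `[0, 1]`, supported in the closed ball of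
radius `R`, of total mass `1`. -/
structure Adm (R : ℝ) (f : EuclideanSpace ℝ (Fin n) → ℝ≥0∞) : Prop where
  meas : Measurable f
  le_one : ∀ x, f x ≤ 1
  supp : ∀ x, R < ‖x‖ → f x = 0
  mass : ∫⁻ x, f x = 1

lemma inner_slice {e : EuclideanSpace ℝ (Fin n)} (he : ‖e‖ = 1) (w : (ℝ ∙ e)ᗮ) (s : ℝ) :
    ⟪e, (w : EuclideanSpace ℝ (Fin n)) + s • e⟫ = s := by
  have : ⟪e, (w : EuclideanSpace ℝ (Fin n))⟫ = 0 :=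
    Submodule.mem_orthogonal_singleton_iff_inner_right.1 w.2
  rw [inner_add_right, inner_smul_right, this, real_inner_self_eq_norm_sq, he]; simp

lemma norm_sq_slice {e : EuclideanSpace ℝ (Fin n)} (he : ‖e‖ = 1) (w : (ℝ ∙ e)ᗮ) (s : ℝ) :
    ‖(w : EuclideanSpace ℝ (Fin n)) + s • e‖ ^ 2 = ‖(w : EuclideanSpace ℝ (Fin n))‖ ^ 2 + s ^ 2 := by
  have : ⟪(w : EuclideanSpace ℝ (Fin n)), e⟫ = 0 :=
    Submodule.mem_orthogonal_singleton_iff_inner_left.1 w.2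
  rw [norm_add_sq_real, inner_smul_right, this, norm_smul, he]; simp

lemma exists_slice {e : EuclideanSpace ℝ (Fin n)} (he : ‖e‖ = 1) (x : EuclideanSpace ℝ (Fin n)) :
    ∃ w : (ℝ ∙ e)ᗮ, x = (w : EuclideanSpace ℝ (Fin n)) + ⟪e, x⟫ • e := by
  refine ⟨⟨x - ⟪e, x⟫ • e, ?_⟩, by simp⟩
  rw [Submodule.mem_orthogonal_singleton_iff_inner_right, inner_sub_right, inner_smul_right,
    real_inner_self_eq_norm_sq, he]
  simp

lemma steiner_slice {e : EuclideanSpace ℝ (Fin n)} (he : ‖e‖ = 1)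
    {f : EuclideanSpace ℝ (Fin n) → ℝ≥0∞} (w : (ℝ ∙ e)ᗮ) (hw : lineMass e f w ≠ ∞) (s : ℝ) :
    steiner e f ((w : EuclideanSpace ℝ (Fin n)) + s • e) =
      (Ioo (-((lineMass e f w).toReal / 2)) ((lineMass e f w).toReal / 2)).indicator 1 s := by
  have : ENNReal.ofReal (2 * |s|) < lineMass e f w ↔
      s ∈ Ioo (-((lineMass e f w).toReal / 2)) ((lineMass e f w).toReal / 2) := by
    rw [← ENNReal.ofReal_toReal hw, ENNReal.ofReal_lt_ofReal_iff_of_nonneg (by positivity),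
      ENNReal.toReal_ofReal ENNReal.toReal_nonneg, mem_Ioo, ← abs_lt]
    constructor <;> intro h <;> linarith
  rw [steiner, lineMass_add, inner_slice he]
  simp only [this, indicator, Pi.one_apply]

/-- If the point of the line at signed height `s` over `e^⊥` lies outside the ball of radius `R`, then
the part of the line inside the ball has length at most `2|s|`. -/
lemma Adm.lineMass_le {R : ℝ} {f : EuclideanSpace ℝ (Fin n) → ℝ≥0∞} (hf : Adm R f)
    {e : EuclideanSpace ℝ (Fin n)} (he : ‖e‖ = 1) (w : (ℝ ∙ e)ᗮ) {s : ℝ}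
    (hs : R < ‖(w : EuclideanSpace ℝ (Fin n)) + s • e‖) :
    lineMass e f w ≤ ENNReal.ofReal (2 * |s|) := by
  have h1 : ∀ t : ℝ, f (w + t • e) ≤ (Ioo (-|s|) |s|).indicator 1 t := by
    intro t
    by_cases ht : t ∈ Ioo (-|s|) |s|
    · simpa [ht] using hf.le_one _
    · rw [indicator_of_notMem ht, hf.supp]
      refine hs.trans_le ?_
      refine le_of_sq_le_sq ?_ (norm_nonneg _)
      rw [norm_sq_slice he, norm_sq_slice he]
      have : |s| ≤ |t| := by
        by_contra h; push Not at h; exact ht (abs_lt.1 h)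
      have := sq_le_sq.2 this
      linarith
  calc lineMass e f w ≤ ∫⁻ t : ℝ, (Ioo (-|s|) |s|).indicator 1 t := lintegral_mono h1
    _ = ENNReal.ofReal (2 * |s|) := by
      rw [lintegral_indicator_one measurableSet_Ioo, Real.volume_Ioo]; congr 1; ring

lemma Adm.lineMass_ne_top {R : ℝ} {f : EuclideanSpace ℝ (Fin n) → ℝ≥0∞} (hf : Adm R f)
    {e : EuclideanSpace ℝ (Fin n)} (he : ‖e‖ = 1) (w : (ℝ ∙ e)ᗮ) : lineMass e f w ≠ ∞ := by
  refine ne_top_of_le_ne_top ?_ (hf.lineMass_le he w (s := |R| + 1) ?_)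
  · exact ENNReal.ofReal_ne_top
  · refine lt_of_lt_of_le (b := |R| + 1) (by linarith [le_abs_self R]) ?_
    refine le_of_sq_le_sq ?_ (norm_nonneg _)
    rw [norm_sq_slice he]; nlinarith [sq_nonneg ‖(w : EuclideanSpace ℝ (Fin n))‖]

lemma lintegral_steiner_slice {R : ℝ} {f : EuclideanSpace ℝ (Fin n) → ℝ≥0∞} (hf : Adm R f)
    {e : EuclideanSpace ℝ (Fin n)} (he : ‖e‖ = 1) (w : (ℝ ∙ e)ᗮ) (h : ℝ → ℝ≥0∞) :
    ∫⁻ s : ℝ, steiner e f ((w : EuclideanSpace ℝ (Fin n)) + s • e) * h s =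
      ∫⁻ s in Ioo (-((lineMass e f w).toReal / 2)) ((lineMass e f w).toReal / 2), h s := by
  rw [← lintegral_indicator measurableSet_Ioo]
  refine lintegral_congr fun s => ?_
  rw [steiner_slice he w (hf.lineMass_ne_top he w)]
  by_cases hs : s ∈ Ioo (-((lineMass e f w).toReal / 2)) ((lineMass e f w).toReal / 2)
  · simp only [indicator_of_mem hs, Pi.one_apply, one_mul]
  · simp only [indicator_of_notMem hs, zero_mul]

/-- Steiner symmetrization preserves integrals against functions constant on lines. -/
lemma lintegral_steiner_mul {R : ℝ} {f : EuclideanSpace ℝ (Fin n) → ℝ≥0∞} (hf : Adm R f)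
    {e : EuclideanSpace ℝ (Fin n)} (he : ‖e‖ = 1) {q : EuclideanSpace ℝ (Fin n) → ℝ≥0∞}
    (hq : Measurable q) (hqe : ∀ x (t : ℝ), q (x + t • e) = q x) :
    ∫⁻ x, steiner e f x * q x = ∫⁻ x, f x * q x := by
  rw [lintegral_slice he (h := fun x => steiner e f x * q x) ((measurable_steiner e hf.meas).mul hq),
    lintegral_slice he (h := fun x => f x * q x) (hf.meas.mul hq)]
  refine lintegral_congr fun w => ?_
  simp only [hqe]
  rw [lintegral_steiner_slice hf he w (fun _ => q w), setLIntegral_const, Real.volume_Ioo,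
    lintegral_mul_const _ (f := fun s : ℝ => f (w + s • e)) (hf.meas.comp (by fun_prop)), mul_comm]
  congr 1
  change _ = lineMass e f w
  rw [← ENNReal.ofReal_toReal (hf.lineMass_ne_top he w)]
  congr 1
  rw [ENNReal.ofReal_toReal (hf.lineMass_ne_top he w)]
  ring

lemma Adm.steiner {R : ℝ} {f : EuclideanSpace ℝ (Fin n) → ℝ≥0∞} (hf : Adm R f)
    {e : EuclideanSpace ℝ (Fin n)} (he : ‖e‖ = 1) : Adm R (steiner e f) where
  meas := measurable_steiner e hf.meas
  le_one x := by unfold _root_.steiner; split_ifs <;> simp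
  supp x hx := by
    obtain ⟨w, hw⟩ := exists_slice he x
    rw [_root_.steiner, if_neg]
    rw [not_lt]
    rw [hw] at hx
    calc lineMass e f x = lineMass e f w := by conv_lhs => rw [hw, lineMass_add]
      _ ≤ _ := hf.lineMass_le he w hx
  mass := by
    have := lintegral_steiner_mul hf he (q := fun _ => 1) measurable_const (fun _ _ => rfl)
    simpa [hf.mass] using this

end steiner

/-! ### The double integral and the second moment under symmetrization -/

section energy
variable {n : ℕ}

/-- The energy `∫∫ f(x) g(y) [x, y]^p dy dx` of a pair of densities, with values in `[0, ∞]`. -/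
def dblInt (p : ℝ) (f g : EuclideanSpace ℝ (Fin n) → ℝ≥0∞) : ℝ≥0∞ :=
  ∫⁻ x, f x * ∫⁻ y, g y * ENNReal.ofReal (sinePair x y ^ p)

/-- The integral of `f(x) ‖x‖²`, used as a strictly monotone quantity under Steiner
symmetrization. -/
def secondMoment (f : EuclideanSpace ℝ (Fin n) → ℝ≥0∞) : ℝ≥0∞ :=
  ∫⁻ x, f x * ENNReal.ofReal (‖x‖ ^ 2)

lemma continuous_sinePair_rpow {p : ℝ} (hp : 0 ≤ p) :
    Continuous fun z : EuclideanSpace ℝ (Fin n) × EuclideanSpace ℝ (Fin n) =>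
      sinePair z.1 z.2 ^ p := by
  unfold sinePair
  exact Continuous.rpow_const (by fun_prop) (fun _ => Or.inr hp)

lemma sinePair_nonneg (x y : EuclideanSpace ℝ (Fin n)) : 0 ≤ sinePair x y := Real.sqrt_nonneg _

/-- Lagrange identity along a pair of parallel lines:
`[w + s e, v + t e]² = [w, v]² + ‖s v - t w‖²` for `w, v ⊥ e`, written as a Euclidean norm in order to
exhibit convexity in `(s, t)`. -/
lemma sinePair_slice {e : EuclideanSpace ℝ (Fin n)} (he : ‖e‖ = 1) (w v : (ℝ ∙ e)ᗮ) (s t : ℝ) :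
    sinePair ((w : EuclideanSpace ℝ (Fin n)) + s • e) ((v : EuclideanSpace ℝ (Fin n)) + t • e) =
      ‖WithLp.toLp 2 (sinePair (w : EuclideanSpace ℝ (Fin n)) v,
        s • (v : EuclideanSpace ℝ (Fin n)) - t • (w : EuclideanSpace ℝ (Fin n)))‖ := by
  have hw : ⟪(w : EuclideanSpace ℝ (Fin n)), e⟫ = 0 :=
    Submodule.mem_orthogonal_singleton_iff_inner_left.1 w.2
  have hv : ⟪e, (v : EuclideanSpace ℝ (Fin n))⟫ = 0 :=
    Submodule.mem_orthogonal_singleton_iff_inner_right.1 v.2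
  have hcs : 0 ≤ ‖(w : EuclideanSpace ℝ (Fin n))‖ ^ 2 * ‖(v : EuclideanSpace ℝ (Fin n))‖ ^ 2 -
      ⟪(w : EuclideanSpace ℝ (Fin n)), v⟫ ^ 2 := by
    have := real_inner_mul_inner_self_le (w : EuclideanSpace ℝ (Fin n)) v
    rw [real_inner_self_eq_norm_sq, real_inner_self_eq_norm_sq] at this
    nlinarith
  rw [WithLp.prod_norm_eq_of_L2]
  unfold sinePair
  congr 1
  simp only [Real.norm_eq_abs, sq_abs, WithLp.toLp_fst, WithLp.toLp_snd]
  rw [Real.sq_sqrt hcs, norm_sq_slice he, norm_sq_slice he, norm_sub_sq_real, inner_add_left,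
    inner_add_right, inner_add_right]
  simp only [inner_smul_left, inner_smul_right, hw, hv, norm_smul, mul_pow, Real.norm_eq_abs,
    sq_abs, real_inner_self_eq_norm_sq, he, real_inner_comm (w : EuclideanSpace ℝ (Fin n)) v]
  simp
  ring

lemma convexOn_slice {p : ℝ} (hp : 1 ≤ p) {e : EuclideanSpace ℝ (Fin n)} (he : ‖e‖ = 1)
    (w v : (ℝ ∙ e)ᗮ) :
    ConvexOn ℝ univ fun z : ℝ × ℝ =>
      sinePair ((w : EuclideanSpace ℝ (Fin n)) + z.1 • e)
        ((v : EuclideanSpace ℝ (Fin n)) + z.2 • e) ^ p := by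
  simp_rw [sinePair_slice he]
  have h1 : ConvexOn ℝ univ fun z : ℝ × ℝ =>
      ‖WithLp.toLp 2 (sinePair (w : EuclideanSpace ℝ (Fin n)) v,
        z.1 • (v : EuclideanSpace ℝ (Fin n)) - z.2 • (w : EuclideanSpace ℝ (Fin n)))‖ := by
    refine ⟨convex_univ, fun x _ y _ a b ha hb hab => ?_⟩
    have : WithLp.toLp 2 (sinePair (w : EuclideanSpace ℝ (Fin n)) v,
        (a • x + b • y).1 • (v : EuclideanSpace ℝ (Fin n)) -
          (a • x + b • y).2 • (w : EuclideanSpace ℝ (Fin n))) =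
        a • WithLp.toLp 2 (sinePair (w : EuclideanSpace ℝ (Fin n)) v,
          x.1 • (v : EuclideanSpace ℝ (Fin n)) - x.2 • (w : EuclideanSpace ℝ (Fin n))) +
        b • WithLp.toLp 2 (sinePair (w : EuclideanSpace ℝ (Fin n)) v,
          y.1 • (v : EuclideanSpace ℝ (Fin n)) - y.2 • (w : EuclideanSpace ℝ (Fin n))) := by
      rw [← WithLp.toLp_smul, ← WithLp.toLp_smul, ← WithLp.toLp_add]
      congr 1
      ext1
      · simp [← add_mul, hab]
      · change (a * x.1 + b * y.1) • (v : EuclideanSpace ℝ (Fin n)) -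
            (a * x.2 + b * y.2) • (w : EuclideanSpace ℝ (Fin n)) =
          a • (x.1 • (v : EuclideanSpace ℝ (Fin n)) - x.2 • (w : EuclideanSpace ℝ (Fin n))) +
          b • (y.1 • (v : EuclideanSpace ℝ (Fin n)) - y.2 • (w : EuclideanSpace ℝ (Fin n)))
        module
    beta_reduce
    rw [this]
    refine (norm_add_le _ _).trans ?_
    rw [norm_smul, norm_smul, Real.norm_of_nonneg ha, Real.norm_of_nonneg hb]
    rfl
  refine ConvexOn.comp (g := fun r : ℝ => r ^ p) ?_ h1 ?_
  · refine (convexOn_rpow hp).subset ?_ ?_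
    · rintro _ ⟨z, -, rfl⟩; exact norm_nonneg _
    · refine IsPreconnected.convex ?_
      refine isPreconnected_univ.image _ (Continuous.continuousOn ?_)
      fun_prop
  · rintro _ ⟨z, -, rfl⟩ _ ⟨z', -, rfl⟩ h
    exact Real.rpow_le_rpow (norm_nonneg _) h (by linarith)

lemma dblInt_slice {p : ℝ} (hp : 1 ≤ p) {e : EuclideanSpace ℝ (Fin n)} (he : ‖e‖ = 1)
    {f g : EuclideanSpace ℝ (Fin n) → ℝ≥0∞} (hf : Measurable f) (hg : Measurable g) :
    dblInt p f g = ∫⁻ w : (ℝ ∙ e)ᗮ, ∫⁻ v : (ℝ ∙ e)ᗮ, ∫⁻ s : ℝ, f (w + s • e) *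
      ∫⁻ t : ℝ, g (v + t • e) * ENNReal.ofReal
        (sinePair ((w : EuclideanSpace ℝ (Fin n)) + s • e)
          ((v : EuclideanSpace ℝ (Fin n)) + t • e) ^ p) := by
  have hk : Measurable fun z : EuclideanSpace ℝ (Fin n) × EuclideanSpace ℝ (Fin n) =>
      ENNReal.ofReal (sinePair z.1 z.2 ^ p) :=
    (continuous_sinePair_rpow (by linarith)).measurable.ennreal_ofReal
  have hgk : Measurable fun z : EuclideanSpace ℝ (Fin n) × EuclideanSpace ℝ (Fin n) =>
      g z.2 * ENNReal.ofReal (sinePair z.1 z.2 ^ p) := (hg.comp measurable_snd).mul hk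
  unfold dblInt
  rw [lintegral_slice he (h := fun x => f x * ∫⁻ y, g y * ENNReal.ofReal (sinePair x y ^ p))
    (hf.mul hgk.lintegral_prod_right')]
  refine lintegral_congr fun w => ?_
  have h1 : ∀ s : ℝ, ∫⁻ y, g y * ENNReal.ofReal
        (sinePair ((w : EuclideanSpace ℝ (Fin n)) + s • e) y ^ p) =
      ∫⁻ v : (ℝ ∙ e)ᗮ, ∫⁻ t : ℝ, g (v + t • e) * ENNReal.ofReal
        (sinePair ((w : EuclideanSpace ℝ (Fin n)) + s • e)
          ((v : EuclideanSpace ℝ (Fin n)) + t • e) ^ p) := fun s =>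
    lintegral_slice he (h := fun y => g y * ENNReal.ofReal
        (sinePair ((w : EuclideanSpace ℝ (Fin n)) + s • e) y ^ p))
      (hgk.comp measurable_prodMk_left)
  have hm3 : Measurable fun z : (ℝ × (ℝ ∙ e)ᗮ) × ℝ =>
      g ((z.1.2 : EuclideanSpace ℝ (Fin n)) + z.2 • e) * ENNReal.ofReal
        (sinePair ((w : EuclideanSpace ℝ (Fin n)) + z.1.1 • e)
          ((z.1.2 : EuclideanSpace ℝ (Fin n)) + z.2 • e) ^ p) :=
    hgk.comp (f := fun z : (ℝ × (ℝ ∙ e)ᗮ) × ℝ =>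
      ((w : EuclideanSpace ℝ (Fin n)) + z.1.1 • e, (z.1.2 : EuclideanSpace ℝ (Fin n)) + z.2 • e))
      (by fun_prop)
  have hm2 : Measurable fun z : ℝ × (ℝ ∙ e)ᗮ => ∫⁻ t : ℝ,
      g ((z.2 : EuclideanSpace ℝ (Fin n)) + t • e) * ENNReal.ofReal
        (sinePair ((w : EuclideanSpace ℝ (Fin n)) + z.1 • e)
          ((z.2 : EuclideanSpace ℝ (Fin n)) + t • e) ^ p) :=
    hm3.lintegral_prod_right' (ν := volume)
  have hfw : Measurable fun s : ℝ => f (w + s • e) := hf.comp (by fun_prop)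
  simp_rw [h1]
  have h2 : ∀ s : ℝ, f (w + s • e) * ∫⁻ v : (ℝ ∙ e)ᗮ, ∫⁻ t : ℝ, g (v + t • e) * ENNReal.ofReal
        (sinePair ((w : EuclideanSpace ℝ (Fin n)) + s • e)
          ((v : EuclideanSpace ℝ (Fin n)) + t • e) ^ p) =
      ∫⁻ v : (ℝ ∙ e)ᗮ, f (w + s • e) * ∫⁻ t : ℝ, g (v + t • e) * ENNReal.ofReal
        (sinePair ((w : EuclideanSpace ℝ (Fin n)) + s • e)
          ((v : EuclideanSpace ℝ (Fin n)) + t • e) ^ p) := fun s =>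
    (lintegral_const_mul _ (hm2.comp measurable_prodMk_left)).symm
  simp_rw [h2]
  refine lintegral_lintegral_swap (Measurable.aemeasurable ?_)
  exact (hfw.comp measurable_fst).mul hm2

/-- Symmetrizing both densities in the same direction does not increase the energy: on each pair of
lines the kernel is convex and even, so `line_ineq` applies. -/
lemma dblInt_steiner_le {p : ℝ} (hp : 1 ≤ p) {R : ℝ} {e : EuclideanSpace ℝ (Fin n)} (he : ‖e‖ = 1)
    {f g : EuclideanSpace ℝ (Fin n) → ℝ≥0∞} (hf : Adm R f) (hg : Adm R g) :
    dblInt p (steiner e f) (steiner e g) ≤ dblInt p f g := by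
  rw [dblInt_slice hp he (measurable_steiner e hf.meas) (measurable_steiner e hg.meas),
    dblInt_slice hp he hf.meas hg.meas]
  refine lintegral_mono fun w => lintegral_mono fun v => ?_
  simp only
  simp_rw [lintegral_steiner_slice hg he v]
  rw [lintegral_steiner_slice hf he w]
  have hhalf : ∀ (h : EuclideanSpace ℝ (Fin n) → ℝ≥0∞), Adm R h → ∀ u : (ℝ ∙ e)ᗮ,
      ∫⁻ s : ℝ, h (u + s • e) = ENNReal.ofReal (2 * ((lineMass e h u).toReal / 2)) := by
    intro h hh u
    rw [mul_div_cancel₀ _ two_ne_zero, ENNReal.ofReal_toReal (hh.lineMass_ne_top he u)]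
    rfl
  refine line_ineq (Φ := fun z => sinePair ((w : EuclideanSpace ℝ (Fin n)) + z.1 • e)
      ((v : EuclideanSpace ℝ (Fin n)) + z.2 • e) ^ p) ?_ ?_ (convexOn_slice hp he w v) ?_
    (hf.meas.comp (by fun_prop)) (hg.meas.comp (by fun_prop)) (fun _ => hf.le_one _)
    (fun _ => hg.le_one _) (by positivity) (by positivity) (hhalf f hf w) (hhalf g hg v)
  · exact (continuous_sinePair_rpow (by linarith)).comp (f := fun z : ℝ × ℝ =>
      ((w : EuclideanSpace ℝ (Fin n)) + z.1 • e, (v : EuclideanSpace ℝ (Fin n)) + z.2 • e))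
      (by fun_prop)
  · exact fun z => Real.rpow_nonneg (sinePair_nonneg _ _) _
  · intro z
    have hz : ‖(-z).1 • (v : EuclideanSpace ℝ (Fin n)) - (-z).2 • (w : EuclideanSpace ℝ (Fin n))‖ =
        ‖z.1 • (v : EuclideanSpace ℝ (Fin n)) - z.2 • (w : EuclideanSpace ℝ (Fin n))‖ := by
      rw [← norm_neg, Prod.fst_neg, Prod.snd_neg]; congr 1; module
    simp only [sinePair_slice he]
    congr 1
    rw [WithLp.prod_norm_eq_of_L2, WithLp.prod_norm_eq_of_L2]
    simp only [WithLp.toLp_fst, WithLp.toLp_snd, hz]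

lemma secondMoment_ne_top {R : ℝ} {f : EuclideanSpace ℝ (Fin n) → ℝ≥0∞} (hf : Adm R f) :
    secondMoment f ≠ ∞ := by
  refine ne_top_of_le_ne_top (b := ∫⁻ x, f x * ENNReal.ofReal (R ^ 2)) ?_
    (lintegral_mono fun x => ?_)
  · rw [lintegral_mul_const _ hf.meas, hf.mass]; simp
  · by_cases hx : R < ‖x‖
    · simp [hf.supp x hx]
    · push Not at hx
      simp only
      gcongr

/-- Steiner symmetrization does not increase the second moment, and preserves it only if it fixes the
density. On each line `‖x‖²` is compared with its value `q` at the end points of the symmetrized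
interval; `q` is constant on lines, so its integrals against `f` and `steiner e f` agree. -/
lemma steiner_secondMoment {R : ℝ} {e : EuclideanSpace ℝ (Fin n)} (he : ‖e‖ = 1)
    {f : EuclideanSpace ℝ (Fin n) → ℝ≥0∞} (hf : Adm R f) :
    secondMoment (steiner e f) ≤ secondMoment f ∧
      (secondMoment f ≤ secondMoment (steiner e f) → f =ᵐ[volume] steiner e f) := by
  -- `a x` is the half-length of the interval, `q` the value of `‖·‖²` at its end points.
  set a : EuclideanSpace ℝ (Fin n) → ℝ := fun x => (lineMass e f x).toReal / 2 with ha
  set q : EuclideanSpace ℝ (Fin n) → ℝ := fun x => ‖x‖ ^ 2 - ⟪e, x⟫ ^ 2 + a x ^ 2 with hq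
  have hfin : ∀ x, lineMass e f x ≠ ∞ := by
    intro x
    obtain ⟨w, hw⟩ := exists_slice he x
    rw [hw, lineMass_add]; exact hf.lineMass_ne_top he w
  have ham : Measurable a := (measurable_lineMass e hf.meas).ennreal_toReal.div_const 2
  have hqm : Measurable q := by fun_prop
  have hq0 : ∀ x, 0 ≤ q x := by
    intro x
    obtain ⟨w, hw⟩ := exists_slice he x
    have := norm_sq_slice he w ⟪e, x⟫
    rw [← hw] at this
    simp only [hq]; nlinarith [sq_nonneg ‖(w : EuclideanSpace ℝ (Fin n))‖, sq_nonneg (a x)]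
  have hqe : ∀ x (t : ℝ), q (x + t • e) = q x := by
    intro x t
    simp only [hq, ha, lineMass_add]
    rw [norm_add_sq_real, inner_add_right, inner_smul_right, inner_smul_right,
      real_inner_self_eq_norm_sq, norm_smul, he, real_inner_comm e x]
    simp; ring
  -- `D` is the nonnegative density whose integral is the drop of the second moment.
  set D : EuclideanSpace ℝ (Fin n) → ℝ≥0∞ := fun x =>
    (1 - f x) * (steiner e f x * ENNReal.ofReal (q x - ‖x‖ ^ 2)) +
      f x * ((1 - steiner e f x) * ENNReal.ofReal (‖x‖ ^ 2 - q x)) with hD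
  have hsm := measurable_steiner e hf.meas
  have hDm : Measurable D := by
    have h1 : Measurable fun x => ENNReal.ofReal (q x - ‖x‖ ^ 2) :=
      Measurable.ennreal_ofReal (by fun_prop)
    have h2 : Measurable fun x => ENNReal.ofReal (‖x‖ ^ 2 - q x) :=
      Measurable.ennreal_ofReal (by fun_prop)
    exact ((measurable_const.sub hf.meas).mul (hsm.mul h1)).add
      (hf.meas.mul ((measurable_const.sub hsm).mul h2))
  have hin : ∀ x, steiner e f x = 1 ∧ |⟪e, x⟫| < a x ∨ steiner e f x = 0 ∧ a x ≤ |⟪e, x⟫| := by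
    intro x
    have : ENNReal.ofReal (2 * |⟪e, x⟫|) < lineMass e f x ↔ |⟪e, x⟫| < a x := by
      rw [← ENNReal.ofReal_toReal (hfin x), ENNReal.ofReal_lt_ofReal_iff_of_nonneg (by positivity)]
      simp only [ha]; constructor <;> intro h <;> linarith
    by_cases h : |⟪e, x⟫| < a x
    · exact Or.inl ⟨if_pos (this.2 h), h⟩
    · exact Or.inr ⟨if_neg fun h' => h (this.1 h'), not_lt.1 h⟩
  have a0 : ∀ x, 0 ≤ a x := fun x => by positivity
  have pt : ∀ x, f x * ENNReal.ofReal (‖x‖ ^ 2) + steiner e f x * ENNReal.ofReal (q x) =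
      steiner e f x * ENNReal.ofReal (‖x‖ ^ 2) + f x * ENNReal.ofReal (q x) + D x := by
    intro x
    rcases hin x with ⟨h1, h2⟩ | ⟨h1, h2⟩
    · have hle : ‖x‖ ^ 2 ≤ q x := by
        have := sq_lt_sq' (by linarith [abs_nonneg ⟪e, x⟫]) h2
        rw [sq_abs] at this; simp only [hq]; linarith
      have e1 : ENNReal.ofReal (q x) =
          ENNReal.ofReal (‖x‖ ^ 2) + ENNReal.ofReal (q x - ‖x‖ ^ 2) := by
        rw [← ENNReal.ofReal_add (by positivity) (by linarith)]; congr 1; ring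
      have e2 : f x + (1 - f x) = 1 := add_tsub_cancel_of_le (hf.le_one x)
      simp only [hD, h1, e1, tsub_self, zero_mul, mul_zero, add_zero, one_mul]
      conv_lhs => rw [← one_mul (ENNReal.ofReal (q x - ‖x‖ ^ 2)), ← e2]
      ring
    · have hle : q x ≤ ‖x‖ ^ 2 := by
        have := pow_le_pow_left₀ (a0 x) h2 2
        rw [sq_abs] at this; simp only [hq]; linarith
      have e1 : ENNReal.ofReal (‖x‖ ^ 2) =
          ENNReal.ofReal (q x) + ENNReal.ofReal (‖x‖ ^ 2 - q x) := by
        rw [← ENNReal.ofReal_add (hq0 x) (by linarith)]; congr 1; ring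
      simp only [hD, h1, e1, tsub_zero, zero_mul, mul_zero, add_zero, one_mul, zero_add]
      ring
  have hqm' : Measurable fun x => ENNReal.ofReal (q x) := hqm.ennreal_ofReal
  have hnm : Measurable fun x : EuclideanSpace ℝ (Fin n) => ENNReal.ofReal (‖x‖ ^ 2) :=
    Measurable.ennreal_ofReal (by fun_prop)
  have C : ∫⁻ x, steiner e f x * ENNReal.ofReal (q x) = ∫⁻ x, f x * ENNReal.ofReal (q x) :=
    lintegral_steiner_mul hf he hqm' fun x t => by rw [hqe]
  have Cfin : ∫⁻ x, steiner e f x * ENNReal.ofReal (q x) ≠ ∞ := by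
    rw [C]
    refine ne_top_of_le_ne_top (b := ∫⁻ x, f x * ENNReal.ofReal (R ^ 2 + (|R| + 1) ^ 2)) ?_
      (lintegral_mono fun x => ?_)
    · rw [lintegral_mul_const _ hf.meas, hf.mass]; simp
    · by_cases hx : R < ‖x‖
      · simp [hf.supp x hx]
      · push Not at hx
        simp only
        gcongr
        have h1 : ‖x‖ ^ 2 ≤ R ^ 2 := pow_le_pow_left₀ (norm_nonneg _) hx 2
        have h2 : a x ≤ |R| + 1 := by
          obtain ⟨w, hw⟩ := exists_slice he x
          have := hf.lineMass_le he w (s := |R| + 1) (by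
            refine lt_of_lt_of_le (b := |R| + 1) (by linarith [le_abs_self R]) ?_
            refine le_of_sq_le_sq ?_ (norm_nonneg _)
            rw [norm_sq_slice he]; nlinarith [sq_nonneg ‖(w : EuclideanSpace ℝ (Fin n))‖])
          have h3 := ENNReal.toReal_mono ENNReal.ofReal_ne_top this
          rw [ENNReal.toReal_ofReal (by positivity), abs_of_nonneg (by positivity)] at h3
          simp only [ha]
          rw [hw, lineMass_add]; linarith
        have h3 := pow_le_pow_left₀ (a0 x) h2 2
        simp only [hq]; nlinarith [sq_nonneg ⟪e, x⟫]
  have main : secondMoment f = secondMoment (steiner e f) + ∫⁻ x, D x := by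
    have h1 := lintegral_congr (μ := volume) pt
    rw [lintegral_add_left (f := fun x => f x * ENNReal.ofReal (‖x‖ ^ 2)) (hf.meas.mul hnm),
      lintegral_add_right _ hDm,
      lintegral_add_left (f := fun x => steiner e f x * ENNReal.ofReal (‖x‖ ^ 2)) (hsm.mul hnm),
      ← C] at h1
    have h2 : secondMoment f + ∫⁻ x, steiner e f x * ENNReal.ofReal (q x) =
        (secondMoment (steiner e f) + ∫⁻ x, D x) + ∫⁻ x, steiner e f x * ENNReal.ofReal (q x) := by
      unfold secondMoment
      rw [h1]; ring
    exact (ENNReal.add_left_inj Cfin).1 h2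
  refine ⟨by rw [main]; exact le_self_add, fun hle => ?_⟩
  have D0 : ∫⁻ x, D x = 0 := by
    have hf' := secondMoment_ne_top (hf.steiner he)
    rw [main] at hle
    have : secondMoment (steiner e f) + ∫⁻ x, D x ≤ secondMoment (steiner e f) + 0 := by
      simpa using hle
    simpa using (ENNReal.add_le_add_iff_left hf').1 this
  have D0' := (lintegral_eq_zero_iff hDm).1 D0
  -- `D` degenerates only at the end points of the intervals, which form a null set.
  have hnull : ∀ᵐ x : EuclideanSpace ℝ (Fin n), |⟪e, x⟫| ≠ a x := by
    have hms : MeasurableSet {x : EuclideanSpace ℝ (Fin n) | |⟪e, x⟫| = a x} :=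
      measurableSet_eq_fun (by fun_prop) ham
    rw [ae_iff]
    simp only [ne_eq, not_not]
    rw [← lintegral_indicator_one hms, lintegral_slice he (measurable_one.indicator hms)]
    refine (lintegral_congr fun w => ?_).trans lintegral_zero
    rw [lintegral_eq_zero_iff (f := fun s : ℝ =>
      {x : EuclideanSpace ℝ (Fin n) | |⟪e, x⟫| = a x}.indicator 1
        ((w : EuclideanSpace ℝ (Fin n)) + s • e))
      ((measurable_one.indicator hms).comp (by fun_prop))]
    have : ∀ᵐ s : ℝ, s ≠ a w ∧ s ≠ - a w := by
      have h1 : ∀ r : ℝ, ∀ᵐ s : ℝ, s ≠ r := fun r => by simp [ae_iff]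
      filter_upwards [h1 (a w), h1 (-a w)] with s h2 h3 using ⟨h2, h3⟩
    filter_upwards [this] with s hs
    refine indicator_of_notMem ?_ _
    change ¬ (|⟪e, (w : EuclideanSpace ℝ (Fin n)) + s • e⟫| = (lineMass e f _).toReal / 2)
    rw [inner_slice he, lineMass_add]
    intro h
    rcases eq_or_eq_neg_of_abs_eq h with h' | h'
    · exact hs.1 h'
    · exact hs.2 h'
  filter_upwards [D0', hnull] with x hx hne
  simp only [hD, Pi.zero_apply, add_eq_zero] at hx
  rcases hin x with ⟨h1, h2⟩ | ⟨h1, h2⟩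
  · have hlt : ‖x‖ ^ 2 < q x := by
      have := sq_lt_sq' (by linarith [abs_nonneg ⟪e, x⟫]) h2
      rw [sq_abs] at this; simp only [hq]; linarith
    have := hx.1
    rw [h1, one_mul, mul_eq_zero] at this
    rcases this with h | h
    · rw [h1]; exact le_antisymm (hf.le_one x) (tsub_eq_zero_iff_le.1 h)
    · rw [ENNReal.ofReal_eq_zero] at h; linarith
  · have hlt : q x < ‖x‖ ^ 2 := by
      have := pow_lt_pow_left₀ (lt_of_le_of_ne h2 (Ne.symm hne)) (a0 x) two_ne_zero
      rw [sq_abs] at this; simp only [hq]; linarith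
    have := hx.2
    rw [h1, tsub_zero, one_mul, mul_eq_zero] at this
    rcases this with h | h
    · rw [h1, h]
    · rw [ENNReal.ofReal_eq_zero] at h; linarith

end energy

/-! ### Minimizers of the second moment -/

section existence
variable {n : ℕ}

open Filter Topology NNReal in
lemma le_of_forall_lintegral_le {X : Type*} [MeasurableSpace X] [TopologicalSpace X]
    [TopologicalSpace.PseudoMetrizableSpace X] [BorelSpace X] {μ ν : Measure X}
    [IsFiniteMeasure μ] [IsFiniteMeasure ν]
    (h : ∀ φ : BoundedContinuousFunction X ℝ≥0, ∫⁻ x, φ x ∂μ ≤ ∫⁻ x, φ x ∂ν) : μ ≤ ν := by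
  have hcl : ∀ F : Set X, IsClosed F → μ F ≤ ν F := fun F hF =>
    le_of_tendsto_of_tendsto' (HasOuterApproxClosed.tendsto_lintegral_apprSeq hF μ)
      (HasOuterApproxClosed.tendsto_lintegral_apprSeq hF ν) fun k => h _
  refine Measure.le_iff.2 fun s hs => ?_
  rw [hs.measure_eq_iSup_isClosed_of_ne_top (measure_ne_top μ s)]
  exact iSup₂_le fun F hFs => iSup_le fun hF => (hcl F hF).trans (measure_mono hFs)

open NNReal in
lemma continuous_lintegral_probabilityMeasure {X : Type*} [MeasurableSpace X] [TopologicalSpace X]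
    [CompactSpace X] [OpensMeasurableSpace X] {φ : X → ℝ} (hφ : Continuous φ) :
    Continuous fun μ : ProbabilityMeasure X => ∫⁻ x, ENNReal.ofReal (φ x) ∂(μ : Measure X) := by
  have hc : Continuous fun x => (φ x).toNNReal := continuous_real_toNNReal.comp hφ
  have := fun (f : BoundedContinuousFunction X ℝ≥0) => continuous_iff_continuousAt.2
    fun (μ : ProbabilityMeasure X) =>
      (ProbabilityMeasure.tendsto_iff_forall_lintegral_tendsto.1
        (Filter.tendsto_id (x := nhds μ))) f
  exact this (BoundedContinuousFunction.mkOfCompact ⟨fun x => (φ x).toNNReal, hc⟩)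

lemma Adm.exists_probabilityMeasure {R : ℝ} {f : EuclideanSpace ℝ (Fin n) → ℝ≥0∞} (hf : Adm R f) :
    ∃ μ : ProbabilityMeasure (closedBall (0 : EuclideanSpace ℝ (Fin n)) R),
      μ.toMeasure.map Subtype.val = volume.withDensity f := by
  have hB : MeasurableSet (closedBall (0 : EuclideanSpace ℝ (Fin n)) R) :=
    measurableSet_closedBall
  have hmap : Measure.map Subtype.val ((volume.withDensity f).comap
      (Subtype.val : closedBall (0 : EuclideanSpace ℝ (Fin n)) R → _)) =
      volume.withDensity f := by
    rw [map_comap_subtype_coe hB, restrict_withDensity hB, ← withDensity_indicator hB]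
    congr 1
    refine indicator_eq_self.2 fun x hx => ?_
    by_contra hx'
    refine hx (hf.supp x ?_)
    simpa using hx'
  refine ⟨⟨(volume.withDensity f).comap Subtype.val, ⟨?_⟩⟩, hmap⟩
  have := congrArg (fun m => m univ) hmap
  simp only [withDensity_apply _ MeasurableSet.univ, Measure.restrict_univ, hf.mass] at this
  rwa [Measure.map_apply measurable_subtype_coe MeasurableSet.univ, preimage_univ] at this

/-- A probability measure on the ball dominated by Lebesgue measure has an admissible density; the
Radon-Nikodym derivative is adjusted on a null set. -/
lemma exists_adm {R : ℝ} (μ : ProbabilityMeasure (closedBall (0 : EuclideanSpace ℝ (Fin n)) R))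
    (hμ : μ.toMeasure.map Subtype.val ≤ (volume : Measure (EuclideanSpace ℝ (Fin n)))) :
    ∃ f : EuclideanSpace ℝ (Fin n) → ℝ≥0∞, Adm R f ∧ μ.toMeasure.map Subtype.val = volume.withDensity f := by
  set m : Measure (EuclideanSpace ℝ (Fin n)) := μ.toMeasure.map Subtype.val with hm
  have hB : MeasurableSet (closedBall (0 : EuclideanSpace ℝ (Fin n)) R) :=
    measurableSet_closedBall
  have : IsProbabilityMeasure m :=
    Measure.isProbabilityMeasure_map measurable_subtype_coe.aemeasurable
  have hres : m.restrict (closedBall 0 R) = m := by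
    refine Measure.restrict_eq_self_of_ae_mem ?_
    exact (ae_map_iff measurable_subtype_coe.aemeasurable hB).2 (ae_of_all _ fun x => x.2)
  have : m.HaveLebesgueDecomposition (volume : Measure (EuclideanSpace ℝ (Fin n))) :=
    Measure.haveLebesgueDecomposition_of_sigmaFinite m volume
  have h0 : volume.withDensity (m.rnDeriv volume) = m :=
    Measure.withDensity_rnDeriv_eq _ _ (Measure.absolutelyContinuous_of_le hμ)
  set f : EuclideanSpace ℝ (Fin n) → ℝ≥0∞ :=
    (closedBall 0 R).indicator fun x => min (m.rnDeriv volume x) 1 with hf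
  have key : m = volume.withDensity f := by
    rw [hf, withDensity_indicator hB]
    conv_lhs => rw [← hres, ← h0, restrict_withDensity hB]
    refine withDensity_congr_ae (ae_restrict_of_ae ?_)
    filter_upwards [Measure.rnDeriv_le_one_of_le hμ] with x hx
    exact (min_eq_left hx).symm
  refine ⟨f, ⟨?_, ?_, ?_, ?_⟩, key⟩
  · exact ((Measure.measurable_rnDeriv _ _).min measurable_const).indicator hB
  · exact fun x => indicator_le' (fun _ _ => min_le_right _ _) (fun _ _ => zero_le) x
  · intro x hx
    exact indicator_of_notMem (by simpa using hx) _
  · have : m univ = 1 := measure_univ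
    rw [key, withDensity_apply _ MeasurableSet.univ] at this
    simpa using this

lemma lintegral_of_map {X : Type*} [MeasurableSpace X] {ι : X → EuclideanSpace ℝ (Fin n)}
    (hι : Measurable ι) {f : EuclideanSpace ℝ (Fin n) → ℝ≥0∞} (hf : Measurable f)
    {μ : Measure X} (hμ : μ.map ι = volume.withDensity f)
    {h : EuclideanSpace ℝ (Fin n) → ℝ≥0∞} (hh : Measurable h) :
    ∫⁻ x, f x * h x = ∫⁻ x, h (ι x) ∂μ := by
  rw [← lintegral_map hh hι, hμ, lintegral_withDensity_eq_lintegral_mul _ hf hh]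
  rfl

lemma dblInt_of_map {X : Type*} [MeasurableSpace X] {ι : X → EuclideanSpace ℝ (Fin n)}
    (hι : Measurable ι) {p : ℝ} (hp : 0 ≤ p) {f g : EuclideanSpace ℝ (Fin n) → ℝ≥0∞}
    (hf : Measurable f) (hg : Measurable g) {μ ν : Measure X} [SFinite ν]
    (hμ : μ.map ι = volume.withDensity f) (hν : ν.map ι = volume.withDensity g) :
    dblInt p f g = ∫⁻ z, ENNReal.ofReal (sinePair (ι z.1) (ι z.2) ^ p) ∂(μ.prod ν) := by
  have hk := (continuous_sinePair_rpow (n := n) hp).measurable.ennreal_ofReal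
  have hG : Measurable fun x : EuclideanSpace ℝ (Fin n) =>
      ∫⁻ y, g y * ENNReal.ofReal (sinePair x y ^ p) :=
    Measurable.lintegral_prod_right' (ν := volume)
      (f := fun z : EuclideanSpace ℝ (Fin n) × EuclideanSpace ℝ (Fin n) =>
        g z.2 * ENNReal.ofReal (sinePair z.1 z.2 ^ p)) ((hg.comp measurable_snd).mul hk)
  have hm : Measurable fun z : X × X => (ι z.1, ι z.2) := by fun_prop
  calc dblInt p f g = ∫⁻ x, (∫⁻ y, g y * ENNReal.ofReal (sinePair (ι x) y ^ p)) ∂μ :=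
        lintegral_of_map hι hf hμ hG
    _ = ∫⁻ x, (∫⁻ y, ENNReal.ofReal (sinePair (ι x) (ι y) ^ p) ∂ν) ∂μ := by
      refine lintegral_congr fun x => ?_
      have hx : Measurable fun y => ENNReal.ofReal (sinePair (ι x) y ^ p) :=
        hk.comp (f := fun y => (ι x, y)) measurable_prodMk_left
      exact lintegral_of_map hι hg hν hx
    _ = _ := (lintegral_prod (fun z : X × X => ENNReal.ofReal (sinePair (ι z.1) (ι z.2) ^ p))
        (hk.comp hm).aemeasurable).symm

open NNReal in
/-- Among the pairs of admissible densities with energy at most that of `(f₀, g₀)`, one minimizes the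
sum of the second moments. The pairs are viewed as pairs of probability measures on the closed ball;
being dominated by Lebesgue measure and the energy bound are weakly closed conditions, and the space
of probability measures on a compact space is compact. -/
lemma exists_minimizer {R p : ℝ} (hp : 0 ≤ p) {f₀ g₀ : EuclideanSpace ℝ (Fin n) → ℝ≥0∞}
    (hf₀ : Adm R f₀) (hg₀ : Adm R g₀) :
    ∃ f g : EuclideanSpace ℝ (Fin n) → ℝ≥0∞, Adm R f ∧ Adm R g ∧ dblInt p f g ≤ dblInt p f₀ g₀ ∧
      ∀ f' g' : EuclideanSpace ℝ (Fin n) → ℝ≥0∞, Adm R f' → Adm R g' → dblInt p f' g' ≤ dblInt p f₀ g₀ →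
        secondMoment f + secondMoment g ≤ secondMoment f' + secondMoment g' := by
  have : CompactSpace (closedBall (0 : EuclideanSpace ℝ (Fin n)) R) :=
    isCompact_iff_compactSpace.1 (isCompact_closedBall _ _)
  have hB : MeasurableSet (closedBall (0 : EuclideanSpace ℝ (Fin n)) R) :=
    measurableSet_closedBall
  set lam : Measure (closedBall (0 : EuclideanSpace ℝ (Fin n)) R) :=
    (volume : Measure (EuclideanSpace ℝ (Fin n))).comap Subtype.val with hlam
  have hlamfin : IsFiniteMeasure lam := ⟨by
    rw [hlam, Measure.comap_apply _ Subtype.val_injective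
      (fun s hs => hB.subtype_image hs) _ MeasurableSet.univ]
    refine lt_of_le_of_lt (measure_mono (t := closedBall 0 R) ?_) measure_closedBall_lt_top
    rintro _ ⟨x, -, rfl⟩; exact x.2⟩
  have hlammap : lam.map Subtype.val ≤ (volume : Measure (EuclideanSpace ℝ (Fin n))) := by
    rw [hlam, map_comap_subtype_coe hB]; exact Measure.restrict_le_self
  -- domination by Lebesgue measure, tested on continuous functions: a weakly closed condition
  set C : Set (ProbabilityMeasure (closedBall (0 : EuclideanSpace ℝ (Fin n)) R)) :=
    ⋂ φ : BoundedContinuousFunction (closedBall (0 : EuclideanSpace ℝ (Fin n)) R) ℝ≥0,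
      {μ | ∫⁻ x, φ x ∂(μ : Measure _) ≤ ∫⁻ x, φ x ∂lam} with hC
  have hCcl : IsClosed C := by
    refine isClosed_iInter fun φ => isClosed_le ?_ continuous_const
    exact continuous_iff_continuousAt.2 fun μ =>
      (ProbabilityMeasure.tendsto_iff_forall_lintegral_tendsto.1
        (Filter.tendsto_id (x := nhds μ))) φ
  have hC1 : ∀ μ ∈ C, μ.toMeasure.map Subtype.val ≤
      (volume : Measure (EuclideanSpace ℝ (Fin n))) := by
    intro μ hμ
    refine le_trans (Measure.map_mono ?_ measurable_subtype_coe) hlammap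
    exact le_of_forall_lintegral_le fun φ => mem_iInter.1 hμ φ
  have hC2 : ∀ (f : EuclideanSpace ℝ (Fin n) → ℝ≥0∞), Adm R f →
      ∀ (μ : ProbabilityMeasure (closedBall (0 : EuclideanSpace ℝ (Fin n)) R)),
      μ.toMeasure.map Subtype.val = volume.withDensity f → μ ∈ C := by
    intro f hf μ hμ
    refine mem_iInter.2 fun φ => lintegral_mono' ?_ le_rfl
    have h1 : volume.withDensity f ≤ volume := by
      have := withDensity_mono (μ := (volume : Measure (EuclideanSpace ℝ (Fin n))))
        (ae_of_all _ hf.le_one)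
      refine this.trans ?_
      exact (withDensity_one (μ := (volume : Measure (EuclideanSpace ℝ (Fin n))))).le
    rw [← hμ] at h1
    refine Measure.le_iff.2 fun s hs => ?_
    have h2 := h1 (Subtype.val '' s)
    rwa [Measure.map_apply measurable_subtype_coe (hB.subtype_image hs),
      preimage_image_eq _ Subtype.val_injective,
      ← Measure.comap_apply _ Subtype.val_injective (fun s hs => hB.subtype_image hs) _ hs] at h2
  have hkc : Continuous fun z : closedBall (0 : EuclideanSpace ℝ (Fin n)) R ×
      closedBall (0 : EuclideanSpace ℝ (Fin n)) R =>
        sinePair (z.1 : EuclideanSpace ℝ (Fin n)) z.2 ^ p :=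
    (continuous_sinePair_rpow hp).comp (f := fun z : closedBall (0 : EuclideanSpace ℝ (Fin n)) R ×
      closedBall (0 : EuclideanSpace ℝ (Fin n)) R =>
        ((z.1 : EuclideanSpace ℝ (Fin n)), (z.2 : EuclideanSpace ℝ (Fin n)))) (by fun_prop)
  set S : Set (ProbabilityMeasure (closedBall (0 : EuclideanSpace ℝ (Fin n)) R) ×
      ProbabilityMeasure (closedBall (0 : EuclideanSpace ℝ (Fin n)) R)) :=
    (C ×ˢ C) ∩ {z | ∫⁻ x : closedBall (0 : EuclideanSpace ℝ (Fin n)) R ×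
      closedBall (0 : EuclideanSpace ℝ (Fin n)) R, ENNReal.ofReal (sinePair (x.1 : EuclideanSpace ℝ (Fin n)) x.2 ^ p)
      ∂(z.1.prod z.2).toMeasure ≤ dblInt p f₀ g₀} with hS
  have hScl : IsClosed S := (hCcl.prod hCcl).inter (isClosed_le
    ((continuous_lintegral_probabilityMeasure hkc).comp ProbabilityMeasure.continuous_prod)
    continuous_const)
  obtain ⟨μ₀, hμ₀⟩ := hf₀.exists_probabilityMeasure
  obtain ⟨ν₀, hν₀⟩ := hg₀.exists_probabilityMeasure
  have hmem : ∀ f g : EuclideanSpace ℝ (Fin n) → ℝ≥0∞, Adm R f → Adm R g →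
      dblInt p f g ≤ dblInt p f₀ g₀ → ∀ μ ν,
      (μ : ProbabilityMeasure (closedBall (0 : EuclideanSpace ℝ (Fin n)) R)).toMeasure.map
        Subtype.val = volume.withDensity f →
      (ν : ProbabilityMeasure (closedBall (0 : EuclideanSpace ℝ (Fin n)) R)).toMeasure.map
        Subtype.val = volume.withDensity g → (μ, ν) ∈ S := by
    intro f g hf hg hle μ ν hμ hν
    refine ⟨⟨hC2 f hf μ hμ, hC2 g hg ν hν⟩, ?_⟩
    rw [dblInt_of_map measurable_subtype_coe hp hf.meas hg.meas hμ hν] at hle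
    exact hle
  have hqc : Continuous fun x : closedBall (0 : EuclideanSpace ℝ (Fin n)) R =>
      ‖(x : EuclideanSpace ℝ (Fin n))‖ ^ 2 := by fun_prop
  have hMc : Continuous fun z : ProbabilityMeasure (closedBall (0 : EuclideanSpace ℝ (Fin n)) R) ×
      ProbabilityMeasure (closedBall (0 : EuclideanSpace ℝ (Fin n)) R) =>
      ∫⁻ x : closedBall (0 : EuclideanSpace ℝ (Fin n)) R,
        ENNReal.ofReal (‖(x : EuclideanSpace ℝ (Fin n))‖ ^ 2) ∂z.1.toMeasure +
      ∫⁻ x : closedBall (0 : EuclideanSpace ℝ (Fin n)) R,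
        ENNReal.ofReal (‖(x : EuclideanSpace ℝ (Fin n))‖ ^ 2) ∂z.2.toMeasure :=
    ((continuous_lintegral_probabilityMeasure hqc).comp continuous_fst).add
      ((continuous_lintegral_probabilityMeasure hqc).comp continuous_snd)
  obtain ⟨⟨μ, ν⟩, hz, hmin⟩ := hScl.isCompact.exists_isMinOn
    ⟨(μ₀, ν₀), hmem f₀ g₀ hf₀ hg₀ le_rfl _ _ hμ₀ hν₀⟩ hMc.continuousOn
  obtain ⟨f, hf, hfμ⟩ := exists_adm μ (hC1 μ hz.1.1)
  obtain ⟨g, hg, hgν⟩ := exists_adm ν (hC1 ν hz.1.2)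
  have hsq : Measurable fun x : EuclideanSpace ℝ (Fin n) => ENNReal.ofReal (‖x‖ ^ 2) :=
    Measurable.ennreal_ofReal (by fun_prop)
  refine ⟨f, g, hf, hg, ?_, fun f' g' hf' hg' hle => ?_⟩
  · rw [dblInt_of_map measurable_subtype_coe hp hf.meas hg.meas hfμ hgν]; exact hz.2
  · obtain ⟨μ', hμ'⟩ := hf'.exists_probabilityMeasure
    obtain ⟨ν', hν'⟩ := hg'.exists_probabilityMeasure
    have := hmin (hmem f' g' hf' hg' hle _ _ hμ' hν')
    simp only [secondMoment, lintegral_of_map measurable_subtype_coe hf.meas hfμ hsq, lintegral_of_map measurable_subtype_coe hg.meas hgν hsq,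
      lintegral_of_map measurable_subtype_coe hf'.meas hμ' hsq, lintegral_of_map measurable_subtype_coe hg'.meas hν' hsq]
    exact this

end existence

/-! ### Invariance under all symmetrizations forces a ball -/

section rigidity
variable {n : ℕ}

lemma steiner_anti {e : EuclideanSpace ℝ (Fin n)} (he : ‖e‖ = 1)
    (f : EuclideanSpace ℝ (Fin n) → ℝ≥0∞) {x : EuclideanSpace ℝ (Fin n)} {t : ℝ}
    (hx : ‖x‖ < ‖x + t • e‖) : steiner e f (x + t • e) ≤ steiner e f x := by
  have h1 : |⟪e, x⟫| ≤ |⟪e, x + t • e⟫| := by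
    refine sq_le_sq.1 ?_
    have h2 := pow_lt_pow_left₀ hx (norm_nonneg _) two_ne_zero
    rw [norm_add_sq_real, inner_smul_right, norm_smul, he, real_inner_comm, mul_one,
      Real.norm_eq_abs, sq_abs] at h2
    rw [inner_add_right, inner_smul_right, real_inner_self_eq_norm_sq, he]
    nlinarith
  unfold steiner
  rw [lineMass_add]
  split_ifs with h3 h4
  · exact le_rfl
  · refine absurd (lt_of_le_of_lt (ENNReal.ofReal_le_ofReal ?_) h3) h4
    linarith
  · exact zero_le
  · exact le_rfl

/-- A density fixed by all Steiner symmetrizations is almost everywhere radially nonincreasing: two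
points `x`, `x + v` lie on a common line in direction `v`, and `steiner_anti` applies there. -/
lemma ae_anti_of_steiner {f : EuclideanSpace ℝ (Fin n) → ℝ≥0∞} (hf : Measurable f)
    (h : ∀ e : EuclideanSpace ℝ (Fin n), ‖e‖ = 1 → f =ᵐ[volume] steiner e f) :
    ∀ᵐ x : EuclideanSpace ℝ (Fin n), ∀ᵐ y : EuclideanSpace ℝ (Fin n), ‖x‖ < ‖y‖ → f y ≤ f x := by
  have h1 : ∀ v : EuclideanSpace ℝ (Fin n), ∀ᵐ x : EuclideanSpace ℝ (Fin n),
      ‖x‖ < ‖x + v‖ → f (x + v) ≤ f x := by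
    intro v
    by_cases hv : v = 0
    · simp [hv]
    have hv' : ‖v‖ ≠ 0 := norm_ne_zero_iff.2 hv
    set e := ‖v‖⁻¹ • v with he
    have he1 : ‖e‖ = 1 := by rw [he, norm_smul, norm_inv, norm_norm, inv_mul_cancel₀ hv']
    have hve : v = ‖v‖ • e := by rw [he, smul_smul, mul_inv_cancel₀ hv', one_smul]
    have h2 := h e he1
    have h3 : ∀ᵐ x : EuclideanSpace ℝ (Fin n), f (x + v) = steiner e f (x + v) :=
      (measurePreserving_add_right volume v).quasiMeasurePreserving.ae h2
    filter_upwards [h2, h3] with x hx hxv hlt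
    rw [hx, hxv]
    rw [hve] at hlt ⊢
    exact steiner_anti he1 f hlt
  have hms : MeasurableSet {z : EuclideanSpace ℝ (Fin n) × EuclideanSpace ℝ (Fin n) |
      ‖z.2‖ < ‖z.2 + z.1‖ → f (z.2 + z.1) ≤ f z.2} := by
    have : {z : EuclideanSpace ℝ (Fin n) × EuclideanSpace ℝ (Fin n) |
        ‖z.2‖ < ‖z.2 + z.1‖ → f (z.2 + z.1) ≤ f z.2} = {z | ‖z.2‖ < ‖z.2 + z.1‖}ᶜ ∪
        {z | f (z.2 + z.1) ≤ f z.2} := by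
      ext z; simp [imp_iff_not_or]
    rw [this]
    exact (measurableSet_lt (by fun_prop) (by fun_prop)).compl.union
      (measurableSet_le (hf.comp (by fun_prop)) (hf.comp measurable_snd))
  have h4 : ∀ᵐ x : EuclideanSpace ℝ (Fin n), ∀ᵐ v : EuclideanSpace ℝ (Fin n),
      ‖x‖ < ‖x + v‖ → f (x + v) ≤ f x :=
    (Measure.ae_ae_comm (μ := volume) (ν := volume) hms).1 (ae_of_all _ h1)
  filter_upwards [h4] with x hx
  have h5 := (measurePreserving_add_left volume (-x)).quasiMeasurePreserving.ae hx
  filter_upwards [h5] with y hy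
  simpa using hy

/-- An admissible density fixed by all Steiner symmetrizations is the indicator of the centred ball of
volume `1`. -/
lemma eq_ball_of_steiner (hn : 2 ≤ n) {R r : ℝ} {f : EuclideanSpace ℝ (Fin n) → ℝ≥0∞}
    (hf : Adm R f) (h : ∀ e : EuclideanSpace ℝ (Fin n), ‖e‖ = 1 → f =ᵐ[volume] steiner e f)
    (hr : volume (ball (0 : EuclideanSpace ℝ (Fin n)) r) = 1) :
    f =ᵐ[volume] (ball (0 : EuclideanSpace ℝ (Fin n)) r).indicator 1 := by
  have hB : MeasurableSet (ball (0 : EuclideanSpace ℝ (Fin n)) r) := measurableSet_ball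
  have h01 : ∀ᵐ x, f x = 0 ∨ f x = 1 := by
    have := h (EuclideanSpace.single ⟨0, by omega⟩ 1) (by simp)
    filter_upwards [this] with x hx
    rw [hx]; unfold steiner; split_ifs <;> simp
  have hsum := lintegral_add_compl (μ := volume) f hB
  rw [hf.mass] at hsum
  have hout : ∀ᵐ x, x ∉ ball (0 : EuclideanSpace ℝ (Fin n)) r → f x = 0 := by
    by_cases hc : ∀ᵐ x, x ∈ ball (0 : EuclideanSpace ℝ (Fin n)) r → f x = 1
    · have h1 : ∫⁻ x in ball 0 r, f x = 1 := by
        rw [setLIntegral_congr_fun_ae hB (g := fun _ => 1) hc, setLIntegral_one, hr]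
      have h2 : ∫⁻ x in (ball 0 r)ᶜ, f x = 0 := by
        rw [h1] at hsum
        have : 1 + ∫⁻ x in (ball 0 r)ᶜ, f x = 1 + 0 := by rw [hsum, add_zero]
        exact (ENNReal.add_right_inj ENNReal.one_ne_top).1 this
      rw [lintegral_eq_zero_iff hf.meas] at h2
      exact (ae_restrict_iff' hB.compl).1 h2
    · have hfreq : ∃ᵐ x, ¬ (x ∈ ball (0 : EuclideanSpace ℝ (Fin n)) r → f x = 1) :=
        Filter.not_eventually.1 hc
      obtain ⟨x, hx, hx0, hanti⟩ :=
        (hfreq.and_eventually (h01.and (ae_anti_of_steiner hf.meas h))).exists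
      push Not at hx
      have hfx : f x = 0 := hx0.resolve_right hx.2
      filter_upwards [hanti] with y hy hyB
      have := hy (by
        have h1 := hx.1
        simp only [mem_ball, dist_zero_right, not_lt] at h1 hyB
        linarith)
      rw [hfx] at this
      exact le_antisymm this zero_le
  have hle : f ≤ᵐ[volume] (ball (0 : EuclideanSpace ℝ (Fin n)) r).indicator 1 := by
    filter_upwards [hout] with x hx
    by_cases hxB : x ∈ ball (0 : EuclideanSpace ℝ (Fin n)) r
    · rw [indicator_of_mem hxB]; exact hf.le_one x
    · rw [hx hxB]; exact zero_le
  refine ae_eq_of_ae_le_of_lintegral_le hle (by rw [hf.mass]; simp)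
    (measurable_one.indicator hB).aemeasurable ?_
  rw [lintegral_indicator_one hB, hr, hf.mass]

lemma dblInt_congr {p : ℝ} {f f' g g' : EuclideanSpace ℝ (Fin n) → ℝ≥0∞}
    (hf : f =ᵐ[volume] f') (hg : g =ᵐ[volume] g') : dblInt p f g = dblInt p f' g' := by
  unfold dblInt
  refine lintegral_congr_ae ?_
  filter_upwards [hf] with x hx
  rw [hx]
  congr 1
  refine lintegral_congr_ae ?_
  filter_upwards [hg] with y hy
  rw [hy]

/-- The ball minimizes the energy among admissible densities: symmetrizing a pair from
`exists_minimizer` keeps the energy bound, so it cannot lower the second moments, hence the pair is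
fixed by all symmetrizations and consists of balls. -/
lemma dblInt_ball_le (hn : 2 ≤ n) {R r p : ℝ} (hp : 1 ≤ p)
    (hr : volume (ball (0 : EuclideanSpace ℝ (Fin n)) r) = 1)
    {f₀ g₀ : EuclideanSpace ℝ (Fin n) → ℝ≥0∞} (hf₀ : Adm R f₀) (hg₀ : Adm R g₀) :
    dblInt p ((ball (0 : EuclideanSpace ℝ (Fin n)) r).indicator 1)
      ((ball (0 : EuclideanSpace ℝ (Fin n)) r).indicator 1) ≤ dblInt p f₀ g₀ := by
  obtain ⟨f, g, hf, hg, hle, hmin⟩ := exists_minimizer (by linarith : 0 ≤ p) hf₀ hg₀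
  have key : ∀ e : EuclideanSpace ℝ (Fin n), ‖e‖ = 1 →
      f =ᵐ[volume] steiner e f ∧ g =ᵐ[volume] steiner e g := by
    intro e he
    have h1 := hmin _ _ (hf.steiner he) (hg.steiner he) ((dblInt_steiner_le hp he hf hg).trans hle)
    obtain ⟨a1, a2⟩ := steiner_secondMoment he hf
    obtain ⟨b1, b2⟩ := steiner_secondMoment he hg
    constructor
    · refine a2 ((ENNReal.add_le_add_iff_right (secondMoment_ne_top hg)).1 (h1.trans ?_))
      gcongr
    · refine b2 ((ENNReal.add_le_add_iff_left (secondMoment_ne_top hf)).1 (h1.trans ?_))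
      gcongr
  rw [← dblInt_congr (eq_ball_of_steiner hn hf (fun e he => (key e he).1) hr)
    (eq_ball_of_steiner hn hg (fun e he => (key e he).2) hr)]
  exact hle

end rigidity

/-! ### Scaling, and passage to unbounded sets -/

section scaling
variable {n : ℕ}

lemma lintegral_eq_smul {a : ℝ} (ha : 0 < a) {h : EuclideanSpace ℝ (Fin n) → ℝ≥0∞}
    (hh : Measurable h) :
    ∫⁻ x, h x = ENNReal.ofReal (a ^ n) * ∫⁻ x, h (a • x) := by
  have h1 := Measure.map_addHaar_smul (volume : Measure (EuclideanSpace ℝ (Fin n))) ha.ne'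
  rw [finrank_euclideanSpace_fin, abs_of_pos (by positivity)] at h1
  have h2 : ∫⁻ x, h (a • x) = ∫⁻ x, h x ∂(Measure.map (a • ·) volume) :=
    (lintegral_map hh (measurable_const_smul a)).symm
  rw [h2, h1, lintegral_smul_measure, smul_eq_mul, ← mul_assoc,
    ← ENNReal.ofReal_mul (by positivity), mul_inv_cancel₀ (by positivity)]
  simp

lemma sinePair_smul {a b : ℝ} (ha : 0 ≤ a) (hb : 0 ≤ b) (x y : EuclideanSpace ℝ (Fin n)) :
    sinePair (a • x) (b • y) = a * b * sinePair x y := by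
  unfold sinePair
  have : a * b = √((a * b) ^ 2) := (Real.sqrt_sq (by positivity)).symm
  rw [this, ← Real.sqrt_mul (by positivity)]
  congr 1
  rw [norm_smul, norm_smul, inner_smul_left, inner_smul_right]
  simp only [Real.norm_eq_abs, mul_pow, sq_abs, conj_trivial]
  ring

lemma dblInt_smul {p : ℝ} (hp : 0 ≤ p) {a b : ℝ} (ha : 0 < a) (hb : 0 < b)
    {f g : EuclideanSpace ℝ (Fin n) → ℝ≥0∞} (hf : Measurable f) (hg : Measurable g) :
    dblInt p f g = ENNReal.ofReal ((a * b) ^ ((n : ℝ) + p)) *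
      dblInt p (fun x => f (a • x)) (fun y => g (b • y)) := by
  have hk := (continuous_sinePair_rpow (n := n) hp).measurable.ennreal_ofReal
  have hgk : Measurable fun z : EuclideanSpace ℝ (Fin n) × EuclideanSpace ℝ (Fin n) =>
      g z.2 * ENNReal.ofReal (sinePair z.1 z.2 ^ p) := (hg.comp measurable_snd).mul hk
  have hG : Measurable fun x : EuclideanSpace ℝ (Fin n) =>
      ∫⁻ y, g y * ENNReal.ofReal (sinePair x y ^ p) :=
    hgk.lintegral_prod_right' (ν := volume)
  have hgb : Measurable fun y => g (b • y) := hg.comp (measurable_const_smul b)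
  have hG' : Measurable fun x : EuclideanSpace ℝ (Fin n) =>
      ∫⁻ y, g (b • y) * ENNReal.ofReal (sinePair x y ^ p) :=
    Measurable.lintegral_prod_right' (ν := volume)
      (f := fun z : EuclideanSpace ℝ (Fin n) × EuclideanSpace ℝ (Fin n) =>
        g (b • z.2) * ENNReal.ofReal (sinePair z.1 z.2 ^ p)) ((hgb.comp measurable_snd).mul hk)
  have hkx : ∀ x : EuclideanSpace ℝ (Fin n), Measurable fun y : EuclideanSpace ℝ (Fin n) =>
      ENNReal.ofReal (sinePair x y ^ p) := fun x =>
    hk.comp (f := fun y => (x, y)) measurable_prodMk_left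
  have inner : ∀ x : EuclideanSpace ℝ (Fin n),
      ∫⁻ y, g y * ENNReal.ofReal (sinePair (a • x) y ^ p) =
      ENNReal.ofReal (b ^ n) * ENNReal.ofReal ((a * b) ^ p) *
        ∫⁻ y, g (b • y) * ENNReal.ofReal (sinePair x y ^ p) := by
    intro x
    rw [lintegral_eq_smul hb (h := fun y => g y * ENNReal.ofReal (sinePair (a • x) y ^ p))
      (hg.mul (hkx _)), mul_assoc, ← lintegral_const_mul _
      (f := fun y => g (b • y) * ENNReal.ofReal (sinePair x y ^ p)) (hgb.mul (hkx x))]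
    congr 1
    refine lintegral_congr fun y => ?_
    rw [sinePair_smul ha.le hb.le, Real.mul_rpow (by positivity) (sinePair_nonneg _ _),
      ENNReal.ofReal_mul (by positivity)]
    ring
  unfold dblInt
  rw [lintegral_eq_smul ha (h := fun x => f x * ∫⁻ y, g y * ENNReal.ofReal (sinePair x y ^ p))
    (hf.mul hG)]
  simp only [inner]
  have hfa : Measurable fun x => f (a • x) := hf.comp (measurable_const_smul a)
  have : ∀ x : EuclideanSpace ℝ (Fin n), f (a • x) * (ENNReal.ofReal (b ^ n) *
      ENNReal.ofReal ((a * b) ^ p) * ∫⁻ y, g (b • y) * ENNReal.ofReal (sinePair x y ^ p)) =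
      (ENNReal.ofReal (b ^ n) * ENNReal.ofReal ((a * b) ^ p)) *
      (f (a • x) * ∫⁻ y, g (b • y) * ENNReal.ofReal (sinePair x y ^ p)) := fun x => by ring
  simp only [this]
  rw [lintegral_const_mul (ENNReal.ofReal (b ^ n) * ENNReal.ofReal ((a * b) ^ p))
    (f := fun x => f (a • x) * ∫⁻ y, g (b • y) * ENNReal.ofReal (sinePair x y ^ p))
    (hfa.mul hG'), ← mul_assoc]
  congr 1
  rw [← ENNReal.ofReal_mul (by positivity), ← ENNReal.ofReal_mul (by positivity),
    Real.rpow_add (by positivity), Real.rpow_natCast, mul_pow, mul_assoc]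

lemma dblInt_mono {p : ℝ} {f f' g g' : EuclideanSpace ℝ (Fin n) → ℝ≥0∞}
    (hf : f ≤ f') (hg : g ≤ g') : dblInt p f g ≤ dblInt p f' g' :=
  lintegral_mono fun x => mul_le_mul' (hf x) (lintegral_mono fun y => mul_le_mul' (hg y) le_rfl)

/-- A bounded set dilated by `1/a` to have volume `1` has an admissible indicator. -/
lemma adm_of_set {K : Set (EuclideanSpace ℝ (Fin n))} (hK : MeasurableSet K) {R a : ℝ}
    (ha : 0 < a) (hKR : K ⊆ closedBall 0 R) (hav : ENNReal.ofReal (a ^ n) = volume K)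
    {R' : ℝ} (hR' : R / a ≤ R') :
    Adm R' fun x => K.indicator 1 (a • x) where
  meas := (measurable_one.indicator hK).comp (measurable_const_smul a)
  le_one x := by
    by_cases h : a • x ∈ K
    · simp [h]
    · simp [h]
  supp x hx := by
    refine indicator_of_notMem (fun h => ?_) _
    have := hKR h
    rw [mem_closedBall_zero_iff, norm_smul, Real.norm_of_nonneg ha.le] at this
    have h2 := lt_of_le_of_lt hR' hx
    rw [div_lt_iff₀ ha] at h2
    linarith
  mass := by
    have h1 := lintegral_eq_smul ha (h := K.indicator 1) (measurable_one.indicator hK)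
    rw [lintegral_indicator_one hK, ← hav] at h1
    have h0 : ENNReal.ofReal (a ^ n) ≠ 0 := by simp; positivity
    have : ENNReal.ofReal (a ^ n) * ∫⁻ x, K.indicator 1 (a • x) = ENNReal.ofReal (a ^ n) * 1 := by
      rw [← h1, mul_one]
    exact (ENNReal.mul_right_inj h0 ENNReal.ofReal_ne_top).1 this

lemma dblInt_ge_of_bounded (hn : 2 ≤ n) {p : ℝ} (hp : 1 ≤ p)
    {K L : Set (EuclideanSpace ℝ (Fin n))} (hK : MeasurableSet K) (hL : MeasurableSet L) {R : ℝ}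
    (hKR : K ⊆ closedBall 0 R) (hLR : L ⊆ closedBall 0 R) :
    ENNReal.ofReal (((volume K).toReal * (volume L).toReal /
        (volume (ball (0 : EuclideanSpace ℝ (Fin n)) 1)).toReal ^ 2) ^ (((n : ℝ) + p) / n)) *
      dblInt p ((ball (0 : EuclideanSpace ℝ (Fin n)) 1).indicator 1)
        ((ball (0 : EuclideanSpace ℝ (Fin n)) 1).indicator 1) ≤
    dblInt p (K.indicator 1) (L.indicator 1) := by
  have hn0 : (0 : ℝ) < n := by exact_mod_cast (by omega : 0 < n)
  have hexp : ((n : ℝ) + p) / n ≠ 0 := by positivity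
  have hKfin : volume K ≠ ∞ := ne_top_of_le_ne_top measure_closedBall_lt_top.ne (measure_mono hKR)
  have hLfin : volume L ≠ ∞ := ne_top_of_le_ne_top measure_closedBall_lt_top.ne (measure_mono hLR)
  rcases eq_or_lt_of_le (ENNReal.toReal_nonneg (a := volume K)) with h | hv
  · rw [← h]; simp [Real.zero_rpow hexp]
  rcases eq_or_lt_of_le (ENNReal.toReal_nonneg (a := volume L)) with h | hw
  · rw [← h]; simp [Real.zero_rpow hexp]
  have hBpos : 0 < volume (ball (0 : EuclideanSpace ℝ (Fin n)) 1) := measure_ball_pos _ _ one_pos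
  have hBfin : volume (ball (0 : EuclideanSpace ℝ (Fin n)) 1) ≠ ∞ := measure_ball_lt_top.ne
  set ω := (volume (ball (0 : EuclideanSpace ℝ (Fin n)) 1)).toReal with hω
  have hω0 : 0 < ω := ENNReal.toReal_pos hBpos.ne' hBfin
  set a := (volume K).toReal ^ (1 / (n : ℝ)) with ha
  set b := (volume L).toReal ^ (1 / (n : ℝ)) with hb
  set c := ω ^ (1 / (n : ℝ)) with hc
  have pw : ∀ t : ℝ, 0 < t → (t ^ (1 / (n : ℝ))) ^ n = t := fun t ht => by
    rw [← Real.rpow_natCast, ← Real.rpow_mul ht.le, one_div_mul_cancel hn0.ne', Real.rpow_one]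
  have ha0 : 0 < a := by positivity
  have hb0 : 0 < b := by positivity
  have hc0 : 0 < c := by positivity
  have hr : volume (ball (0 : EuclideanSpace ℝ (Fin n)) c⁻¹) = 1 := by
    have : Nontrivial (EuclideanSpace ℝ (Fin n)) := by
      have : Nonempty (Fin n) := ⟨⟨0, by omega⟩⟩
      infer_instance
    rw [Measure.addHaar_ball _ _ (by positivity), finrank_euclideanSpace_fin, inv_pow, pw ω hω0,
      ← ENNReal.ofReal_toReal hBfin, ← hω, ← ENNReal.ofReal_mul (by positivity),
      inv_mul_cancel₀ hω0.ne', ENNReal.ofReal_one]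
  have hball : ∀ x : EuclideanSpace ℝ (Fin n),
      (ball (0 : EuclideanSpace ℝ (Fin n)) 1).indicator (1 : EuclideanSpace ℝ (Fin n) → ℝ≥0∞) (c • x) =
      (ball (0 : EuclideanSpace ℝ (Fin n)) c⁻¹).indicator 1 x := by
    intro x
    have : c • x ∈ ball (0 : EuclideanSpace ℝ (Fin n)) 1 ↔
        x ∈ ball (0 : EuclideanSpace ℝ (Fin n)) c⁻¹ := by
      rw [mem_ball_zero_iff, mem_ball_zero_iff, norm_smul, Real.norm_of_nonneg hc0.le,
        ← one_div, lt_div_iff₀ hc0, mul_comm]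
    by_cases h : x ∈ ball (0 : EuclideanSpace ℝ (Fin n)) c⁻¹
    · rw [indicator_of_mem h, indicator_of_mem (this.2 h)]; rfl
    · rw [indicator_of_notMem h, indicator_of_notMem fun h' => h (this.1 h')]
  rw [dblInt_smul (by linarith) hc0 hc0 (measurable_one.indicator measurableSet_ball)
    (measurable_one.indicator measurableSet_ball),
    dblInt_smul (by linarith) ha0 hb0 (measurable_one.indicator hK) (measurable_one.indicator hL),
    ← mul_assoc, ← ENNReal.ofReal_mul (by positivity)]
  simp only [hball]
  refine mul_le_mul' (le_of_eq ?_) (dblInt_ball_le hn hp hr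
    (adm_of_set hK ha0 hKR ?_ (le_max_left (R / a) (R / b)))
    (adm_of_set hL hb0 hLR ?_ (le_max_right (R / a) (R / b))))
  · congr 1
    have e1 : ∀ s t : ℝ, 0 < s → 0 < t → (s ^ (1 / (n : ℝ)) * t ^ (1 / (n : ℝ))) ^ ((n : ℝ) + p) =
        (s * t) ^ (((n : ℝ) + p) / n) := by
      intro s t hs ht
      rw [← Real.mul_rpow hs.le ht.le, ← Real.rpow_mul (by positivity)]
      congr 1; ring
    rw [ha, hb, hc, e1 _ _ hω0 hω0, e1 _ _ hv hw, ← Real.mul_rpow (by positivity) (by positivity)]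
    congr 1
    field_simp
  · rw [ha, pw _ hv, ENNReal.ofReal_toReal hKfin]
  · rw [hb, pw _ hw, ENNReal.ofReal_toReal hLfin]

open Filter Topology in
/-- Removes boundedness from `dblInt_ge_of_bounded` by exhausting `K` and `L` with their
intersections with large balls. -/
lemma dblInt_ge (hn : 2 ≤ n) {p : ℝ} (hp : 1 ≤ p)
    {K L : Set (EuclideanSpace ℝ (Fin n))} (hK : MeasurableSet K) (hL : MeasurableSet L)
    (hK0 : volume K ≠ 0) (hL0 : volume L ≠ 0) (hKf : volume K ≠ ∞) (hLf : volume L ≠ ∞) :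
    ENNReal.ofReal (((volume K).toReal * (volume L).toReal /
        (volume (ball (0 : EuclideanSpace ℝ (Fin n)) 1)).toReal ^ 2) ^ (((n : ℝ) + p) / n)) *
      dblInt p ((ball (0 : EuclideanSpace ℝ (Fin n)) 1).indicator 1)
        ((ball (0 : EuclideanSpace ℝ (Fin n)) 1).indicator 1) ≤
    dblInt p (K.indicator 1) (L.indicator 1) := by
  have hn0 : (0 : ℝ) < n := by exact_mod_cast (by omega : 0 < n)
  have htr : ∀ M : Set (EuclideanSpace ℝ (Fin n)), volume M ≠ ∞ →
      Tendsto (fun k : ℕ => (volume (M ∩ closedBall 0 (k : ℝ))).toReal) atTop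
        (𝓝 (volume M).toReal) := by
    intro M hM
    have h1 := tendsto_measure_iUnion_atTop (μ := (volume : Measure (EuclideanSpace ℝ (Fin n))))
      (s := fun k : ℕ => M ∩ closedBall 0 (k : ℝ)) (fun i j hij => by
        refine inter_subset_inter_right _ (closedBall_subset_closedBall ?_)
        exact_mod_cast hij)
    rw [← inter_iUnion, iUnion_closedBall_nat, inter_univ] at h1
    exact (ENNReal.tendsto_toReal hM).comp h1
  have hBpos : 0 < volume (ball (0 : EuclideanSpace ℝ (Fin n)) 1) := measure_ball_pos _ _ one_pos
  have hBfin : volume (ball (0 : EuclideanSpace ℝ (Fin n)) 1) ≠ ∞ := measure_ball_lt_top.ne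
  have hω0 := ENNReal.toReal_pos hBpos.ne' hBfin
  have hv := ENNReal.toReal_pos hK0 hKf
  have hw := ENNReal.toReal_pos hL0 hLf
  have hlim := ENNReal.Tendsto.mul_const (b := dblInt p
      ((ball (0 : EuclideanSpace ℝ (Fin n)) 1).indicator 1)
      ((ball (0 : EuclideanSpace ℝ (Fin n)) 1).indicator 1))
    (ENNReal.tendsto_ofReal (((((htr K hKf).mul (htr L hLf)).div_const
      ((volume (ball (0 : EuclideanSpace ℝ (Fin n)) 1)).toReal ^ 2))).rpow_const
      (p := ((n : ℝ) + p) / n) (Or.inr (by positivity))))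
    (Or.inl (by simp only [ne_eq, ENNReal.ofReal_eq_zero, not_le]; positivity))
  refine le_of_tendsto' hlim fun k => ?_
  refine (dblInt_ge_of_bounded hn hp (hK.inter measurableSet_closedBall)
    (hL.inter measurableSet_closedBall) inter_subset_right inter_subset_right).trans
    (dblInt_mono ?_ ?_)
  · exact indicator_le_indicator_of_subset inter_subset_left fun _ => zero_le
  · exact indicator_le_indicator_of_subset inter_subset_left fun _ => zero_le

end scaling

/-! ### Polar coordinates and one-dimensional integrals -/

lemma lintegral_polar {E : Type*} [NormedAddCommGroup E] [InnerProductSpace ℝ E]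
    [FiniteDimensional ℝ E] [MeasurableSpace E] [BorelSpace E] [Nontrivial E]
    {h : E → ℝ≥0∞} (hh : Measurable h) :
    ∫⁻ x, h x = ∫⁻ u, (∫⁻ r in Ioi (0 : ℝ),
      ENNReal.ofReal (r ^ (Module.finrank ℝ E - 1)) * h (r • (u : E)))
        ∂(volume : Measure E).toSphere := by
  have h0 : Measurable fun z : sphere (0 : E) 1 × Ioi (0 : ℝ) => h ((z.2 : ℝ) • (z.1 : E)) :=
    hh.comp (by fun_prop)
  have e1 : ∀ x : ({0}ᶜ : Set E), h x = h (((homeomorphUnitSphereProd E x).2 : ℝ) •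
      ((homeomorphUnitSphereProd E x).1 : E)) := by
    intro x
    congr 1
    have hx : ‖(x : E)‖ ≠ 0 := norm_ne_zero_iff.2 x.2
    simp [homeomorphUnitSphereProd_apply_fst_coe, smul_smul, hx]
  calc ∫⁻ x, h x = ∫⁻ x in ({0}ᶜ : Set E), h x := by rw [restrict_compl_singleton]
    _ = ∫⁻ x : ({0}ᶜ : Set E), h x ∂(Measure.comap Subtype.val volume) :=
      (lintegral_subtype_comap (measurableSet_singleton _).compl h).symm
    _ = ∫⁻ x : ({0}ᶜ : Set E), h (((homeomorphUnitSphereProd E x).2 : ℝ) •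
          ((homeomorphUnitSphereProd E x).1 : E)) ∂(Measure.comap Subtype.val volume) :=
      lintegral_congr e1
    _ = ∫⁻ z, h ((z.2 : ℝ) • (z.1 : E)) ∂((volume : Measure E).toSphere.prod
          (Measure.volumeIoiPow (Module.finrank ℝ E - 1))) :=
      ((volume : Measure E).measurePreserving_homeomorphUnitSphereProd).lintegral_comp h0
    _ = ∫⁻ u, (∫⁻ r, h ((r : ℝ) • (u : E)) ∂(Measure.volumeIoiPow (Module.finrank ℝ E - 1)))
          ∂(volume : Measure E).toSphere :=
      lintegral_prod (fun z : sphere (0 : E) 1 × Ioi (0 : ℝ) => h ((z.2 : ℝ) • (z.1 : E)))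
        h0.aemeasurable
    _ = _ := by
      refine lintegral_congr fun u => ?_
      have hm : Measurable fun r : Ioi (0 : ℝ) => h ((r : ℝ) • (u : E)) := hh.comp (by fun_prop)
      rw [Measure.volumeIoiPow, lintegral_withDensity_eq_lintegral_mul _ (by fun_prop) hm,
        ← lintegral_subtype_comap measurableSet_Ioi]
      rfl

/-- The integral of a function homogeneous of degree `p` times a radial function splits into a
spherical and a radial factor. -/
lemma lintegral_polar_prod {E : Type*} [NormedAddCommGroup E] [InnerProductSpace ℝ E]
    [FiniteDimensional ℝ E] [MeasurableSpace E] [BorelSpace E] [Nontrivial E] {p : ℝ}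
    {h : E → ℝ≥0∞} (hh : Measurable h)
    (hhom : ∀ (r : ℝ) (u : E), 0 < r → h (r • u) = ENNReal.ofReal (r ^ p) * h u)
    {φ : ℝ → ℝ≥0∞} (hφ : Measurable φ) :
    ∫⁻ x, h x * φ ‖x‖ = (∫⁻ u : sphere (0 : E) 1, h u ∂(volume : Measure E).toSphere) *
      ∫⁻ r in Ioi (0 : ℝ), ENNReal.ofReal (r ^ ((Module.finrank ℝ E : ℝ) - 1 + p)) * φ r := by
  have hd : 1 ≤ Module.finrank ℝ E := Module.finrank_pos
  have hm : Measurable fun r : ℝ =>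
      ENNReal.ofReal (r ^ ((Module.finrank ℝ E : ℝ) - 1 + p)) * φ r :=
    Measurable.mul (by fun_prop) hφ
  rw [lintegral_polar (h := fun x => h x * φ ‖x‖) (hh.mul (hφ.comp measurable_norm)),
    ← lintegral_mul_const _ (f := fun u : sphere (0 : E) 1 => h u)
      (hh.comp measurable_subtype_coe)]
  refine lintegral_congr fun u => ?_
  rw [← lintegral_const_mul _ hm]
  refine setLIntegral_congr_fun measurableSet_Ioi fun r hr => ?_
  have hr0 : (0 : ℝ) < r := hr
  have : r ^ ((Module.finrank ℝ E : ℝ) - 1 + p) = r ^ (Module.finrank ℝ E - 1) * r ^ p := by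
    rw [Real.rpow_add hr0, ← Real.rpow_natCast, Nat.cast_sub hd, Nat.cast_one]
  simp only [this, ENNReal.ofReal_mul (pow_nonneg hr0.le _), hhom r _ hr0, norm_smul,
    Real.norm_of_nonneg hr0.le, norm_eq_of_mem_sphere u, mul_one]
  ring

lemma lintegral_rpow_gauss {q : ℝ} (hq : 0 < q) :
    ∫⁻ r in Ioi (0 : ℝ), ENNReal.ofReal (r ^ (q - 1)) * ENNReal.ofReal (Real.exp (-r ^ 2)) =
      ENNReal.ofReal (Real.Gamma (q / 2) / 2) := by
  have h1 := integral_rpow_mul_exp_neg_rpow (p := 2) (q := q - 1) two_pos (by linarith)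
  have h2 := integrableOn_rpow_mul_exp_neg_rpow (p := 2) (s := q - 1) (by linarith) two_pos
  rw [sub_add_cancel] at h1
  have : Real.Gamma (q / 2) / 2 = 1 / 2 * Real.Gamma (q / 2) := by ring
  rw [this, ← h1, ofReal_integral_eq_lintegral_ofReal h2]
  · refine setLIntegral_congr_fun measurableSet_Ioi fun r hr => ?_
    have hr0 : (0 : ℝ) < r := hr
    simp only [ENNReal.ofReal_mul (Real.rpow_nonneg hr0.le _), Real.rpow_two]
  · filter_upwards [ae_restrict_mem measurableSet_Ioi] with r hr
    have hr0 : (0 : ℝ) < r := hr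
    simp only [Pi.zero_apply]
    positivity

lemma lintegral_rpow_Ioo {q : ℝ} (hq : 0 < q) :
    ∫⁻ r in Ioi (0 : ℝ), ENNReal.ofReal (r ^ (q - 1)) * (Iio (1 : ℝ)).indicator 1 r =
      ENNReal.ofReal (1 / q) := by
  have h1 : ∫ r in Ioc (0 : ℝ) 1, r ^ (q - 1) = 1 / q := by
    rw [← intervalIntegral.integral_of_le zero_le_one, integral_rpow (Or.inl (by linarith))]
    simp [hq.ne']
  have h2 : IntegrableOn (fun r : ℝ => r ^ (q - 1)) (Ioc 0 1) := by
    rw [← intervalIntegrable_iff_integrableOn_Ioc_of_le zero_le_one]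
    exact intervalIntegral.intervalIntegrable_rpow' (by linarith)
  rw [← h1, ofReal_integral_eq_lintegral_ofReal h2]
  · rw [← setLIntegral_congr Ioo_ae_eq_Ioc, ← Ioi_inter_Iio, inter_comm,
      ← Measure.restrict_restrict measurableSet_Iio, ← lintegral_indicator measurableSet_Iio]
    refine lintegral_congr fun r => ?_
    by_cases hr : r ∈ Iio (1 : ℝ)
    · simp only [indicator_of_mem hr, Pi.one_apply, mul_one]
    · simp only [indicator_of_notMem hr, mul_zero]
  · filter_upwards [ae_restrict_mem measurableSet_Ioc] with r hr
    exact Real.rpow_nonneg hr.1.le _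

lemma lintegral_gauss : ∫⁻ s : ℝ, ENNReal.ofReal (Real.exp (-s ^ 2)) =
    ENNReal.ofReal (Real.sqrt Real.pi) := by
  have h1 := integral_gaussian 1
  have h2 := integrable_exp_neg_mul_sq (b := 1) one_pos
  rw [div_one] at h1
  rw [← h1, ofReal_integral_eq_lintegral_ofReal h2 (Filter.Eventually.of_forall fun _ => by positivity)]
  simp

/-! ### The double integral over the unit ball -/

variable {n : ℕ}

lemma sinePair_unit_slice {e : EuclideanSpace ℝ (Fin n)} (he : ‖e‖ = 1) (w : (ℝ ∙ e)ᗮ) (s : ℝ) :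
    sinePair e ((w : EuclideanSpace ℝ (Fin n)) + s • e) = ‖w‖ := by
  rw [sinePair, inner_slice he, norm_sq_slice he, he]
  simp

lemma omegaVol_pos {q : ℝ} (hq : -2 < q) : 0 < omegaVol q :=
  div_pos (Real.rpow_pos_of_pos Real.pi_pos _) (Real.Gamma_pos_of_pos (by linarith))

lemma volume_ball_eq_omegaVol {E : Type*} [NormedAddCommGroup E] [InnerProductSpace ℝ E]
    [FiniteDimensional ℝ E] [MeasurableSpace E] [BorelSpace E] [Nontrivial E] :
    volume (ball (0 : E) 1) = ENNReal.ofReal (omegaVol (Module.finrank ℝ E)) := by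
  rw [InnerProductSpace.volume_ball, ENNReal.ofReal_one, one_pow, one_mul, omegaVol,
    add_comm (1 : ℝ), Real.sqrt_eq_rpow, ← Real.rpow_natCast, ← Real.rpow_mul Real.pi_pos.le]
  congr 3
  ring

/-- The integral of `[e, u]^p` over the sphere. The Gaussian integral of `[e, y]^p` is computed twice: in
polar coordinates of `ℝⁿ`, and by slicing along `e`, where `[e, w + s e] = ‖w‖` reduces it to polar
coordinates of `e^⊥`. -/
lemma lintegral_sphere_sinePair (hn : 2 ≤ n) {p : ℝ} (hp : 1 ≤ p)
    {e : EuclideanSpace ℝ (Fin n)} (he : ‖e‖ = 1) :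
    ∫⁻ u : sphere (0 : EuclideanSpace ℝ (Fin n)) 1,
      ENNReal.ofReal (sinePair e u ^ p) ∂(volume : Measure (EuclideanSpace ℝ (Fin n))).toSphere =
    ENNReal.ofReal (((n : ℝ) - 1) * omegaVol ((n : ℝ) - 1) *
      omegaVol ((n : ℝ) + p - 2) / omegaVol ((n : ℝ) + p - 3)) := by
  have hn2 : (2 : ℝ) ≤ n := by exact_mod_cast hn
  have hne : e ≠ 0 := fun h => by simp [h] at he
  have : Nontrivial (EuclideanSpace ℝ (Fin n)) := ⟨e, 0, hne⟩
  have : Fact (Module.finrank ℝ (EuclideanSpace ℝ (Fin n)) = (n - 1) + 1) :=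
    ⟨by rw [finrank_euclideanSpace_fin]; omega⟩
  have hW : Module.finrank ℝ (ℝ ∙ e)ᗮ = n - 1 := Submodule.finrank_orthogonal_span_singleton hne
  have : Nontrivial (ℝ ∙ e)ᗮ := Module.nontrivial_of_finrank_pos (R := ℝ) (by omega)
  have hWr : (Module.finrank ℝ (ℝ ∙ e)ᗮ : ℝ) = n - 1 := by
    rw [hW, Nat.cast_sub (by omega), Nat.cast_one]
  have hk : Measurable fun y : EuclideanSpace ℝ (Fin n) => ENNReal.ofReal (sinePair e y ^ p) :=
    (continuous_sinePair_rpow (n := n) (zero_le_one.trans hp)).measurable.ennreal_ofReal.comp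
      (f := fun y => (e, y)) measurable_prodMk_left
  have hφ : Measurable fun r : ℝ => ENNReal.ofReal (Real.exp (-r ^ 2)) := by fun_prop
  have hhom : ∀ (r : ℝ) (u : EuclideanSpace ℝ (Fin n)), 0 < r →
      ENNReal.ofReal (sinePair e (r • u) ^ p) =
        ENNReal.ofReal (r ^ p) * ENNReal.ofReal (sinePair e u ^ p) := by
    intro r u hr
    have := sinePair_smul (x := e) (y := u) zero_le_one hr.le
    rw [one_smul, one_mul] at this
    rw [this, Real.mul_rpow hr.le (sinePair_nonneg _ _), ENNReal.ofReal_mul (by positivity)]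
  have hhomW : ∀ (r : ℝ) (w : (ℝ ∙ e)ᗮ), 0 < r →
      ENNReal.ofReal (‖r • w‖ ^ p) = ENNReal.ofReal (r ^ p) * ENNReal.ofReal (‖w‖ ^ p) := by
    intro r w hr
    rw [norm_smul, Real.norm_of_nonneg hr.le, Real.mul_rpow hr.le (norm_nonneg _),
      ENNReal.ofReal_mul (by positivity)]
  -- the Gaussian integral of `[e, y]^p` in polar coordinates
  have g1 := lintegral_polar_prod hk hhom hφ
  -- the same integral, sliced along `e`
  have g2 := lintegral_polar_prod (E := (ℝ ∙ e)ᗮ) (h := fun w => ENNReal.ofReal (‖w‖ ^ p))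
    (by fun_prop) hhomW hφ
  have g3 : ∫⁻ y : EuclideanSpace ℝ (Fin n), ENNReal.ofReal (sinePair e y ^ p) *
      ENNReal.ofReal (Real.exp (-‖y‖ ^ 2)) =
      (∫⁻ w : (ℝ ∙ e)ᗮ, ENNReal.ofReal (‖w‖ ^ p) * ENNReal.ofReal (Real.exp (-‖w‖ ^ 2))) *
        ENNReal.ofReal (Real.sqrt Real.pi) := by
    rw [lintegral_slice he (h := fun y => ENNReal.ofReal (sinePair e y ^ p) *
      ENNReal.ofReal (Real.exp (-‖y‖ ^ 2))) (hk.mul (by fun_prop)),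
      ← lintegral_mul_const _ (f := fun w : (ℝ ∙ e)ᗮ => ENNReal.ofReal (‖w‖ ^ p) *
        ENNReal.ofReal (Real.exp (-‖w‖ ^ 2))) (by fun_prop)]
    refine lintegral_congr fun w => ?_
    rw [← lintegral_gauss, ← lintegral_const_mul _ (by fun_prop)]
    refine lintegral_congr fun s => ?_
    rw [sinePair_unit_slice he, norm_sq_slice he, neg_add, Real.exp_add,
      ENNReal.ofReal_mul (by positivity), mul_assoc]
    rfl
  have hsph : ∫⁻ u : sphere (0 : (ℝ ∙ e)ᗮ) 1, ENNReal.ofReal (‖(u : (ℝ ∙ e)ᗮ)‖ ^ p)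
      ∂(volume : Measure (ℝ ∙ e)ᗮ).toSphere =
      ENNReal.ofReal (((n : ℝ) - 1) * omegaVol ((n : ℝ) - 1)) := by
    have : ∀ u : sphere (0 : (ℝ ∙ e)ᗮ) 1, ENNReal.ofReal (‖(u : (ℝ ∙ e)ᗮ)‖ ^ p) = 1 := fun u => by
      rw [norm_eq_of_mem_sphere u]; simp
    simp only [this]
    rw [lintegral_const, one_mul, Measure.toSphere_apply_univ, volume_ball_eq_omegaVol, hWr,
      ENNReal.ofReal_mul (by linarith), ← hWr, ENNReal.ofReal_natCast]
  have e1 : ((n : ℝ) - 1 + p) = ((n : ℝ) + p) - 1 := by ring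
  have e2 : ((n : ℝ) - 1 - 1 + p) = ((n : ℝ) + p - 1) - 1 := by ring
  rw [finrank_euclideanSpace_fin, e1, lintegral_rpow_gauss (by linarith), g3, g2, hsph, hWr, e2,
    lintegral_rpow_gauss (by linarith)] at g1
  have hG1 : 0 < Real.Gamma (((n : ℝ) + p) / 2) := Real.Gamma_pos_of_pos (by linarith)
  have hG2 : 0 < Real.Gamma (((n : ℝ) + p - 1) / 2) := Real.Gamma_pos_of_pos (by linarith)
  have hω := omegaVol_pos (q := (n : ℝ) - 1) (by linarith)
  rw [← ENNReal.mul_left_inj (c := ENNReal.ofReal (Real.Gamma (((n : ℝ) + p) / 2) / 2))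
    (by simp; positivity) ENNReal.ofReal_ne_top, ← g1,
    ← ENNReal.ofReal_mul (by nlinarith), ← ENNReal.ofReal_mul (by
      have : 0 ≤ (n : ℝ) - 1 := by linarith
      positivity), ← ENNReal.ofReal_mul (by
      have h1 := omegaVol_pos (q := (n : ℝ) + p - 2) (by linarith)
      have h2 := omegaVol_pos (q := (n : ℝ) + p - 3) (by linarith)
      have : 0 ≤ (n : ℝ) - 1 := by linarith
      positivity)]
  congr 1
  have k1 : omegaVol ((n : ℝ) + p - 2) =
      Real.pi ^ (((n : ℝ) + p - 2) / 2) / Real.Gamma (((n : ℝ) + p) / 2) := by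
    rw [omegaVol]; congr 2; ring
  have k2 : omegaVol ((n : ℝ) + p - 3) =
      Real.pi ^ (((n : ℝ) + p - 3) / 2) / Real.Gamma (((n : ℝ) + p - 1) / 2) := by
    rw [omegaVol]; congr 2; ring
  have k3 : Real.pi ^ (((n : ℝ) + p - 2) / 2) =
      Real.pi ^ (((n : ℝ) + p - 3) / 2) * Real.sqrt Real.pi := by
    rw [Real.sqrt_eq_rpow, ← Real.rpow_add Real.pi_pos]; congr 1; ring
  have hpi : 0 < Real.pi ^ (((n : ℝ) + p - 3) / 2) := Real.rpow_pos_of_pos Real.pi_pos _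
  rw [k1, k2, k3]
  field_simp

lemma dblInt_ball (hn : 2 ≤ n) {p : ℝ} (hp : 1 ≤ p) :
    dblInt p ((ball (0 : EuclideanSpace ℝ (Fin n)) 1).indicator 1)
      ((ball (0 : EuclideanSpace ℝ (Fin n)) 1).indicator 1) =
    ENNReal.ofReal ((n : ℝ) * omegaVol n / ((n : ℝ) + p) * (((n : ℝ) - 1) * omegaVol ((n : ℝ) - 1) *
      omegaVol ((n : ℝ) + p - 2) / omegaVol ((n : ℝ) + p - 3) / ((n : ℝ) + p))) := by
  have hn2 : (2 : ℝ) ≤ n := by exact_mod_cast hn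
  have : Nonempty (Fin n) := ⟨⟨0, by omega⟩⟩
  have : Nontrivial (EuclideanSpace ℝ (Fin n)) := inferInstance
  set H := ((n : ℝ) - 1) * omegaVol ((n : ℝ) - 1) *
      omegaVol ((n : ℝ) + p - 2) / omegaVol ((n : ℝ) + p - 3) with hH
  have hH0 : 0 ≤ H := by
    have h1 := omegaVol_pos (q := (n : ℝ) + p - 2) (by linarith)
    have h2 := omegaVol_pos (q := (n : ℝ) + p - 3) (by linarith)
    have h3 := omegaVol_pos (q := (n : ℝ) - 1) (by linarith)
    have : 0 ≤ (n : ℝ) - 1 := by linarith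
    positivity
  have hω := omegaVol_pos (q := (n : ℝ)) (by linarith)
  have hφ : Measurable fun r : ℝ => (Iio (1 : ℝ)).indicator (1 : ℝ → ℝ≥0∞) r :=
    measurable_one.indicator measurableSet_Iio
  have hind : ∀ y : EuclideanSpace ℝ (Fin n),
      (ball (0 : EuclideanSpace ℝ (Fin n)) 1).indicator (1 : EuclideanSpace ℝ (Fin n) → ℝ≥0∞) y =
      (Iio (1 : ℝ)).indicator (1 : ℝ → ℝ≥0∞) ‖y‖ := by
    intro y
    by_cases h : ‖y‖ < 1
    · rw [indicator_of_mem (mem_ball_zero_iff.2 h), indicator_of_mem (mem_Iio.2 h)]; rfl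
    · rw [indicator_of_notMem (fun h' => h (mem_ball_zero_iff.1 h')),
        indicator_of_notMem (fun h' => h (mem_Iio.1 h'))]
  have e1 : ((n : ℝ) - 1 + p) = ((n : ℝ) + p) - 1 := by ring
  have inner : ∀ x : EuclideanSpace ℝ (Fin n), x ≠ 0 →
      ∫⁻ y, (ball (0 : EuclideanSpace ℝ (Fin n)) 1).indicator 1 y *
        ENNReal.ofReal (sinePair x y ^ p) =
      ENNReal.ofReal (‖x‖ ^ p) * ENNReal.ofReal (H / ((n : ℝ) + p)) := by
    intro x hx
    have hx0 : 0 < ‖x‖ := norm_pos_iff.2 hx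
    set e := ‖x‖⁻¹ • x with hedef
    have he : ‖e‖ = 1 := by rw [hedef, norm_smul, norm_inv, norm_norm, inv_mul_cancel₀ hx0.ne']
    have hxe : x = ‖x‖ • e := by rw [hedef, smul_smul, mul_inv_cancel₀ hx0.ne', one_smul]
    have hk : Measurable fun y : EuclideanSpace ℝ (Fin n) => ENNReal.ofReal (sinePair e y ^ p) :=
      (continuous_sinePair_rpow (n := n) (zero_le_one.trans hp)).measurable.ennreal_ofReal.comp
        (f := fun y => (e, y)) measurable_prodMk_left
    have hhom : ∀ (r : ℝ) (u : EuclideanSpace ℝ (Fin n)), 0 < r →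
        ENNReal.ofReal (sinePair e (r • u) ^ p) =
          ENNReal.ofReal (r ^ p) * ENNReal.ofReal (sinePair e u ^ p) := by
      intro r u hr
      have := sinePair_smul (x := e) (y := u) zero_le_one hr.le
      rw [one_smul, one_mul] at this
      rw [this, Real.mul_rpow hr.le (sinePair_nonneg _ _), ENNReal.ofReal_mul (by positivity)]
    have g1 := lintegral_polar_prod hk hhom hφ
    rw [finrank_euclideanSpace_fin, e1, lintegral_rpow_Ioo (by linarith),
      lintegral_sphere_sinePair hn hp he, ← hH, ← ENNReal.ofReal_mul hH0, mul_one_div] at g1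
    rw [← g1, ← lintegral_const_mul _ (f := fun y => ENNReal.ofReal (sinePair e y ^ p) *
      (Iio (1 : ℝ)).indicator (1 : ℝ → ℝ≥0∞) ‖y‖) (hk.mul (hφ.comp measurable_norm))]
    refine lintegral_congr fun y => ?_
    have := sinePair_smul (x := e) (y := y) hx0.le zero_le_one
    rw [one_smul, mul_one, ← hxe] at this
    rw [this, Real.mul_rpow hx0.le (sinePair_nonneg _ _), ENNReal.ofReal_mul (by positivity), hind]
    ring
  have hhomN : ∀ (r : ℝ) (u : EuclideanSpace ℝ (Fin n)), 0 < r →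
      ENNReal.ofReal (‖r • u‖ ^ p) = ENNReal.ofReal (r ^ p) * ENNReal.ofReal (‖u‖ ^ p) := by
    intro r w hr
    rw [norm_smul, Real.norm_of_nonneg hr.le, Real.mul_rpow hr.le (norm_nonneg _),
      ENNReal.ofReal_mul (by positivity)]
  have g2 := lintegral_polar_prod (E := EuclideanSpace ℝ (Fin n))
    (h := fun w => ENNReal.ofReal (‖w‖ ^ p)) (by fun_prop) hhomN hφ
  have hsph : ∫⁻ u : sphere (0 : EuclideanSpace ℝ (Fin n)) 1,
      ENNReal.ofReal (‖(u : EuclideanSpace ℝ (Fin n))‖ ^ p)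
      ∂(volume : Measure (EuclideanSpace ℝ (Fin n))).toSphere =
      ENNReal.ofReal ((n : ℝ) * omegaVol n) := by
    have : ∀ u : sphere (0 : EuclideanSpace ℝ (Fin n)) 1,
        ENNReal.ofReal (‖(u : EuclideanSpace ℝ (Fin n))‖ ^ p) = 1 := fun u => by
      rw [norm_eq_of_mem_sphere u]; simp
    simp only [this]
    rw [lintegral_const, one_mul, Measure.toSphere_apply_univ, volume_ball_eq_omegaVol,
      finrank_euclideanSpace_fin, ENNReal.ofReal_mul (by linarith), ENNReal.ofReal_natCast]
  rw [finrank_euclideanSpace_fin, e1, lintegral_rpow_Ioo (by linarith), hsph,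
    ← ENNReal.ofReal_mul (by positivity), mul_one_div] at g2
  rw [ENNReal.ofReal_mul (by positivity), ← g2, ← lintegral_mul_const _
    (f := fun x : EuclideanSpace ℝ (Fin n) => ENNReal.ofReal (‖x‖ ^ p) *
      (Iio (1 : ℝ)).indicator (1 : ℝ → ℝ≥0∞) ‖x‖)
    (Measurable.mul (by fun_prop) (hφ.comp measurable_norm)), dblInt]
  refine lintegral_congr_ae ?_
  have h0 : ∀ᵐ x : EuclideanSpace ℝ (Fin n), x ≠ 0 := by simp [ae_iff, measure_singleton]
  filter_upwards [h0] with x hx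
  rw [inner x hx, hind]
  ring

/-! ### Finiteness of moments and the inequality -/

/-- Integrability of `ρ_K^(n+p)` gives a finite `p`-th moment of `K`. Since `radialFn` takes the value
`0` in directions in which `K` contains a whole ray, the finiteness of the volume is needed to see
that almost no direction is of this kind. -/
lemma lintegral_norm_rpow_lt_top (hn : 2 ≤ n) {p : ℝ} (hp : 1 ≤ p)
    {K : Set (EuclideanSpace ℝ (Fin n))} (hK : MeasurableSet K) (hKs : IsStarShaped K)
    (hKf : volume K ≠ ∞)
    (hKi : Integrable (fun u : sphere (0 : EuclideanSpace ℝ (Fin n)) 1 =>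
      radialFn K (u : EuclideanSpace ℝ (Fin n)) ^ ((n : ℝ) + p)) (sphereProb n)) :
    ∫⁻ x in K, ENNReal.ofReal (‖x‖ ^ p) < ∞ := by
  have hn2 : (2 : ℝ) ≤ n := by exact_mod_cast hn
  have : Nonempty (Fin n) := ⟨⟨0, by omega⟩⟩
  have : Nontrivial (EuclideanSpace ℝ (Fin n)) := inferInstance
  set ν := (volume : Measure (EuclideanSpace ℝ (Fin n))).toSphere with hν
  have hi : Integrable (fun u : sphere (0 : EuclideanSpace ℝ (Fin n)) 1 =>
      radialFn K (u : EuclideanSpace ℝ (Fin n)) ^ ((n : ℝ) + p)) ν := by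
    rw [sphereProb, ← hν, integrable_smul_measure] at hKi
    · exact hKi
    · exact ENNReal.inv_ne_zero.2 (measure_ne_top _ _)
    · rw [Ne, ENNReal.inv_eq_top, Measure.measure_univ_eq_zero]
      exact Measure.toSphere_ne_zero _
  have hKm : Measurable (K.indicator (1 : EuclideanSpace ℝ (Fin n) → ℝ≥0∞)) :=
    measurable_one.indicator hK
  -- in almost every direction the set of admissible radii is bounded
  have hae : ∀ᵐ u : sphere (0 : EuclideanSpace ℝ (Fin n)) 1 ∂ν,
      BddAbove {r : ℝ | 0 ≤ r ∧ r • (u : EuclideanSpace ℝ (Fin n)) ∈ K} := by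
    have h1 := lintegral_polar hKm
    rw [lintegral_indicator_one hK, finrank_euclideanSpace_fin] at h1
    have hm : Measurable fun u : sphere (0 : EuclideanSpace ℝ (Fin n)) 1 =>
        ∫⁻ r in Ioi (0 : ℝ), ENNReal.ofReal (r ^ (n - 1)) *
          K.indicator 1 (r • (u : EuclideanSpace ℝ (Fin n))) :=
      Measurable.lintegral_prod_right' (ν := volume.restrict (Ioi (0 : ℝ)))
        (f := fun z : sphere (0 : EuclideanSpace ℝ (Fin n)) 1 × ℝ =>
          ENNReal.ofReal (z.2 ^ (n - 1)) *
            K.indicator 1 (z.2 • (z.1 : EuclideanSpace ℝ (Fin n))))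
        (Measurable.mul (by fun_prop) (hKm.comp (by fun_prop)))
    have h2 := ae_lt_top hm (by rw [← h1]; exact hKf)
    filter_upwards [h2] with u hu
    by_contra hb
    have hall : ∀ r : ℝ, 0 < r → r • (u : EuclideanSpace ℝ (Fin n)) ∈ K := by
      intro r hr
      obtain ⟨s, ⟨hs0, hs⟩, hrs⟩ := not_bddAbove_iff.1 hb r
      have hs' : 0 < s := hr.trans hrs
      have := hKs.2 _ hs (r / s) (by positivity) ((div_le_one hs').2 hrs.le)
      rwa [smul_smul, div_mul_cancel₀ _ hs'.ne'] at this
    refine hu.ne (top_le_iff.1 ?_)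
    calc (∞ : ℝ≥0∞) = ∫⁻ _ in Ioi (1 : ℝ), 1 := by simp
      _ ≤ ∫⁻ r in Ioi (1 : ℝ), ENNReal.ofReal (r ^ (n - 1)) *
          K.indicator 1 (r • (u : EuclideanSpace ℝ (Fin n))) := by
        refine setLIntegral_mono' measurableSet_Ioi fun r hr => ?_
        have hr1 : (1 : ℝ) < r := hr
        rw [indicator_of_mem (hall r (by linarith)), Pi.one_apply, mul_one, ENNReal.one_le_ofReal]
        exact one_le_pow₀ hr1.le
      _ ≤ _ := lintegral_mono_set (Ioi_subset_Ioi zero_le_one)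
  rw [← lintegral_indicator hK]
  have hpol := lintegral_polar (h := K.indicator fun x : EuclideanSpace ℝ (Fin n) =>
    ENNReal.ofReal (‖x‖ ^ p)) (Measurable.indicator (by fun_prop) hK)
  rw [hpol, finrank_euclideanSpace_fin]
  refine lt_of_le_of_lt (lintegral_mono_ae ?_) hi.lintegral_lt_top
  filter_upwards [hae] with u hu
  set ρ := radialFn K (u : EuclideanSpace ℝ (Fin n)) with hρ
  have hρ0 : 0 ≤ ρ := Real.sSup_nonneg fun r hr => hr.1
  have hle : ∀ r : ℝ, 0 < r → ENNReal.ofReal (r ^ (n - 1)) *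
      K.indicator (fun x => ENNReal.ofReal (‖x‖ ^ p)) (r • (u : EuclideanSpace ℝ (Fin n))) ≤
      (Icc 0 ρ).indicator (fun _ => ENNReal.ofReal (ρ ^ ((n : ℝ) + p - 1))) r := by
    intro r hr
    by_cases hrK : r • (u : EuclideanSpace ℝ (Fin n)) ∈ K
    · have hrρ : r ≤ ρ := le_csSup hu ⟨hr.le, hrK⟩
      rw [indicator_of_mem hrK, indicator_of_mem (show r ∈ Icc 0 ρ from ⟨hr.le, hrρ⟩),
        ← ENNReal.ofReal_mul (by positivity), norm_smul, norm_eq_of_mem_sphere u, mul_one,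
        Real.norm_of_nonneg hr.le, ← Real.rpow_natCast, ← Real.rpow_add hr,
        Nat.cast_sub (by omega), Nat.cast_one, show (n : ℝ) - 1 + p = n + p - 1 by ring]
      exact ENNReal.ofReal_le_ofReal (Real.rpow_le_rpow hr.le hrρ (by linarith))
    · rw [indicator_of_notMem hrK, mul_zero]; exact zero_le
  calc _ ≤ ∫⁻ r in Ioi (0 : ℝ), (Icc 0 ρ).indicator
        (fun _ => ENNReal.ofReal (ρ ^ ((n : ℝ) + p - 1))) r :=
        setLIntegral_mono' measurableSet_Ioi hle
    _ ≤ ∫⁻ r, (Icc 0 ρ).indicator (fun _ => ENNReal.ofReal (ρ ^ ((n : ℝ) + p - 1))) r :=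
        setLIntegral_le_lintegral _ _
    _ = ENNReal.ofReal (ρ ^ ((n : ℝ) + p)) := by
        rw [lintegral_indicator measurableSet_Icc, setLIntegral_const, Real.volume_Icc, sub_zero,
          ← ENNReal.ofReal_mul (by positivity)]
        congr 1
        rw [show (n : ℝ) + p = n + p - 1 + 1 by ring, Real.rpow_add_one' hρ0 (by linarith)]
        congr 2; ring

lemma sinePair_le (x y : EuclideanSpace ℝ (Fin n)) : sinePair x y ≤ ‖x‖ * ‖y‖ := by
  rw [sinePair]
  refine (Real.sqrt_le_sqrt (sub_le_self _ (sq_nonneg _))).trans ?_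
  rw [← mul_pow, Real.sqrt_sq (by positivity)]

lemma dblInt_indicator {p : ℝ} {K L : Set (EuclideanSpace ℝ (Fin n))} (hK : MeasurableSet K)
    (hL : MeasurableSet L) : dblInt p (K.indicator 1) (L.indicator 1) =
      ∫⁻ x in K, ∫⁻ y in L, ENNReal.ofReal (sinePair x y ^ p) := by
  have key : ∀ (A : Set (EuclideanSpace ℝ (Fin n))) (h : EuclideanSpace ℝ (Fin n) → ℝ≥0∞),
      (fun x => A.indicator 1 x * h x) = A.indicator h := by
    intro A h
    ext x
    by_cases hx : x ∈ A
    · simp [hx]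
    · simp [hx]
  unfold dblInt
  rw [key, lintegral_indicator hK]
  refine lintegral_congr fun x => ?_
  rw [key, lintegral_indicator hL]

lemma dblInt_eq_integral {p : ℝ} (hp : 1 ≤ p)
    {K L : Set (EuclideanSpace ℝ (Fin n))} (hK : MeasurableSet K) (hL : MeasurableSet L)
    (hKm : ∫⁻ x in K, ENNReal.ofReal (‖x‖ ^ p) < ∞)
    (hLm : ∫⁻ x in L, ENNReal.ofReal (‖x‖ ^ p) < ∞) :
    dblInt p (K.indicator 1) (L.indicator 1) =
      ENNReal.ofReal (∫ x in K, ∫ y in L, sinePair x y ^ p) := by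
  have hp0 : 0 ≤ p := zero_le_one.trans hp
  have hc := continuous_sinePair_rpow (n := n) hp0
  have hcx : ∀ x : EuclideanSpace ℝ (Fin n),
      Continuous fun y : EuclideanSpace ℝ (Fin n) => sinePair x y ^ p := fun x =>
    hc.comp (f := fun y => (x, y)) (by fun_prop)
  have hnn : ∀ x y : EuclideanSpace ℝ (Fin n), 0 ≤ sinePair x y ^ p := fun x y =>
    Real.rpow_nonneg (sinePair_nonneg _ _) _
  have hbd : ∀ x y : EuclideanSpace ℝ (Fin n), ENNReal.ofReal (sinePair x y ^ p) ≤
      ENNReal.ofReal (‖x‖ ^ p) * ENNReal.ofReal (‖y‖ ^ p) := by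
    intro x y
    rw [← ENNReal.ofReal_mul (by positivity), ← Real.mul_rpow (norm_nonneg _) (norm_nonneg _)]
    exact ENNReal.ofReal_le_ofReal
      (Real.rpow_le_rpow (sinePair_nonneg _ _) (sinePair_le x y) hp0)
  have hin : ∀ x : EuclideanSpace ℝ (Fin n), ∫⁻ y in L, ENNReal.ofReal (sinePair x y ^ p) ≤
      ENNReal.ofReal (‖x‖ ^ p) * ∫⁻ y in L, ENNReal.ofReal (‖y‖ ^ p) := by
    intro x
    rw [← lintegral_const_mul _ (by fun_prop)]
    exact lintegral_mono fun y => hbd x y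
  have hinteg : ∀ x : EuclideanSpace ℝ (Fin n),
      Integrable (fun y => sinePair x y ^ p) (volume.restrict L) := by
    intro x
    refine ⟨(hcx x).aestronglyMeasurable, ?_⟩
    rw [hasFiniteIntegral_iff_ofReal (Filter.Eventually.of_forall fun y => hnn x y)]
    exact (hin x).trans_lt (ENNReal.mul_lt_top ENNReal.ofReal_lt_top hLm)
  have heq : ∀ x : EuclideanSpace ℝ (Fin n), ENNReal.ofReal (∫ y in L, sinePair x y ^ p) =
      ∫⁻ y in L, ENNReal.ofReal (sinePair x y ^ p) := fun x =>
    ofReal_integral_eq_lintegral_ofReal (hinteg x) (Filter.Eventually.of_forall fun y => hnn x y)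
  have hsm : StronglyMeasurable fun x : EuclideanSpace ℝ (Fin n) =>
      ∫ y in L, sinePair x y ^ p :=
    StronglyMeasurable.integral_prod_right' (ν := volume.restrict L)
      (f := fun z : EuclideanSpace ℝ (Fin n) × EuclideanSpace ℝ (Fin n) =>
        sinePair z.1 z.2 ^ p) hc.stronglyMeasurable
  have hnn' : ∀ x : EuclideanSpace ℝ (Fin n), 0 ≤ ∫ y in L, sinePair x y ^ p := fun x =>
    integral_nonneg fun y => hnn x y
  rw [dblInt_indicator hK hL, ofReal_integral_eq_lintegral_ofReal _
    (Filter.Eventually.of_forall hnn')]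
  · simp only [heq]
  · refine ⟨hsm.aestronglyMeasurable, ?_⟩
    rw [hasFiniteIntegral_iff_ofReal (Filter.Eventually.of_forall hnn')]
    simp only [heq]
    refine (lintegral_mono hin).trans_lt ?_
    rw [lintegral_mul_const _ (by fun_prop)]
    exact ENNReal.mul_lt_top hKm hLm

/-- the sharp lower bound for `∫_K ∫_L [x,y]^p dx dy`. -/
theorem lp_sine_double_integral_inequality {n : ℕ} (hn : 2 ≤ n) {p : ℝ} (hp : 1 ≤ p)
    {K L : Set (EuclideanSpace ℝ (Fin n))} (hK : MeasurableSet K) (hL : MeasurableSet L)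
    (hKs : IsStarShaped K) (hLs : IsStarShaped L)
    (hKi : Integrable (fun u : sphere (0 : EuclideanSpace ℝ (Fin n)) 1 =>
      radialFn K (u : EuclideanSpace ℝ (Fin n)) ^ ((n : ℝ) + p)) (sphereProb n))
    (hLi : Integrable (fun u : sphere (0 : EuclideanSpace ℝ (Fin n)) 1 =>
      radialFn L (u : EuclideanSpace ℝ (Fin n)) ^ ((n : ℝ) + p)) (sphereProb n)) :
    (n : ℝ) * ((n : ℝ) - 1) * omegaVol ((n : ℝ) - 1) * omegaVol ((n : ℝ) + p - 2) /
        (((n : ℝ) + p) ^ 2 * omegaVol ((n : ℝ) + p - 3) *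
          omegaVol (n : ℝ) ^ (1 + 2 * p / (n : ℝ))) *
      ((volume K).toReal * (volume L).toReal) ^ (((n : ℝ) + p) / (n : ℝ)) ≤
    ∫ x in K, ∫ y in L, sinePair x y ^ p := by
  have hn2 : (2 : ℝ) ≤ n := by exact_mod_cast hn
  have hn0 : (0 : ℝ) < n := by linarith
  have hexp : ((n : ℝ) + p) / n ≠ 0 := by positivity
  have hnonneg : 0 ≤ ∫ x in K, ∫ y in L, sinePair x y ^ p :=
    integral_nonneg fun x => integral_nonneg fun y => Real.rpow_nonneg (sinePair_nonneg _ _) _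
  -- `toReal` sends both `0` and `∞` to `0`, so a degenerate volume makes the left side vanish
  by_cases hKv : (volume K).toReal = 0
  · rw [hKv, zero_mul, Real.zero_rpow hexp, mul_zero]; exact hnonneg
  by_cases hLv : (volume L).toReal = 0
  · rw [hLv, mul_zero, Real.zero_rpow hexp, mul_zero]; exact hnonneg
  rw [ENNReal.toReal_eq_zero_iff, not_or] at hKv hLv
  have hmain := dblInt_ge hn hp hK hL hKv.1 hLv.1 hKv.2 hLv.2
  rw [dblInt_eq_integral hp hK hL (lintegral_norm_rpow_lt_top hn hp hK hKs hKv.2 hKi)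
    (lintegral_norm_rpow_lt_top hn hp hL hLs hLv.2 hLi), dblInt_ball hn hp,
    ← ENNReal.ofReal_mul (by positivity), ENNReal.ofReal_le_ofReal_iff hnonneg] at hmain
  refine le_trans (le_of_eq ?_) hmain
  have : Nonempty (Fin n) := ⟨⟨0, by omega⟩⟩
  have : Nontrivial (EuclideanSpace ℝ (Fin n)) := inferInstance
  have hω := omegaVol_pos (q := (n : ℝ)) (by linarith)
  have h1 := omegaVol_pos (q := (n : ℝ) + p - 3) (by linarith)
  have hball : (volume (ball (0 : EuclideanSpace ℝ (Fin n)) 1)).toReal = omegaVol n := by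
    rw [volume_ball_eq_omegaVol, finrank_euclideanSpace_fin, ENNReal.toReal_ofReal hω.le]
  have hpow : (omegaVol n ^ 2) ^ (((n : ℝ) + p) / n) =
      omegaVol n ^ (1 + 2 * p / (n : ℝ)) * omegaVol n := by
    rw [← Real.rpow_natCast, ← Real.rpow_mul hω.le, ← Real.rpow_add_one hω.ne']
    congr 1
    push_cast
    field_simp
    ring
  have hω' : 0 < omegaVol n ^ (1 + 2 * p / (n : ℝ)) := by positivity
  have hnp : 0 < (n : ℝ) + p := by linarith
  rw [hball, Real.div_rpow (by positivity) (by positivity), hpow]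
  field_simp
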